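/- Let K ⊂ ℝ^3 be a convex body, H a plane, and p an interior point of K not lying on any plane of symmetry of K parallel to H. Suppose p is a Larman point of K but not a revolution point, and for every plane Π through p the section Π ∩ K has a line of symmetry parallel to H. Then K is an ellipsoid of revolution whose axis of revolution is perpendicular to H. -/

import Mathlib

noncomputable section

open Metric Set MeasureTheory

/-- Euclidean n-space. -/
abbrev Euc (n : ℕ) := EuclideanSpace ℝ (Fin n)

/-- A convex body: compact, convex, with nonempty interior. -/
def IsConvexBody {n : ℕ} (K : Set (Euc n)) : Prop :=
  IsCompact K ∧ Convex ℝ K ∧ (interior K).Nonempty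

/-- `f` is the (orthogonal) reflection of the space with fixed-point set the affine
subspace `A`: an involutive isometry whose fixed points are exactly `A`. -/
def IsReflectionFix {n : ℕ} (f : Euc n → Euc n) (A : AffineSubspace ℝ (Euc n)) : Prop :=
  Isometry f ∧ f ∘ f = id ∧ {x | f x = x} = (A : Set (Euc n))

/-- `A` is a plane of symmetry of the set `K`. -/
def IsSymmetryPlane {n : ℕ} (K : Set (Euc n)) (A : AffineSubspace ℝ (Euc n)) : Prop :=
  ∃ f : Euc n → Euc n, IsReflectionFix f A ∧ f '' K = K

/-- `L` is a plane of symmetry of the set `s` within the flat `P`: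
some involutive isometry of the ambient space preserves `P`, has exactly `L` as
fixed-point set inside `P`, and maps `s` onto itself. -/
def IsSymmPlaneOfIn {n : ℕ} (s : Set (Euc n)) (P L : AffineSubspace ℝ (Euc n)) : Prop :=
  L ≤ P ∧ ∃ f : Euc n → Euc n, Isometry f ∧ f ∘ f = id ∧
    f '' (P : Set (Euc n)) = (P : Set (Euc n)) ∧
    {x ∈ (P : Set (Euc n)) | f x = x} = (L : Set (Euc n)) ∧ f '' s = s

/-- `L` is a plane of symmetry of the section `P ∩ K` within the flat `P`. -/
def IsSectionSymmPlane {n : ℕ} (K : Set (Euc n)) (P L : AffineSubspace ℝ (Euc n)) : Prop :=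
  IsSymmPlaneOfIn ((P : Set (Euc n)) ∩ K) P L

/-- A hyperplane: a nonempty affine subspace whose direction has dimension `n - 1`. -/
def IsHyperplane {n : ℕ} (A : AffineSubspace ℝ (Euc n)) : Prop :=
  (A : Set (Euc n)).Nonempty ∧ Module.finrank ℝ A.direction = n - 1

/-- A rotation about the affine subspace `L`: an affine isometry fixing `L`
pointwise whose linear part has determinant one (orientation preserving). -/
def IsRotationAbout {n : ℕ} (f : Euc n ≃ᵃⁱ[ℝ] Euc n) (L : AffineSubspace ℝ (Euc n)) : Prop :=
  (∀ x ∈ L, f x = x) ∧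
    LinearMap.det (f.linearIsometryEquiv.toLinearEquiv : Euc n →ₗ[ℝ] Euc n) = 1

/-- A body of revolution with axis the line `L`. -/
def IsRevolutionBody {n : ℕ} (K : Set (Euc n)) (L : AffineSubspace ℝ (Euc n)) : Prop :=
  IsConvexBody K ∧ (L : Set (Euc n)).Nonempty ∧ Module.finrank ℝ L.direction = 1 ∧
    ∀ f : Euc n ≃ᵃⁱ[ℝ] Euc n, IsRotationAbout f L → f '' K = K

/-- A `k`-dimensional ellipsoid: affine image of a `k`-dimensional unit ball. -/
def IsEllipsoidOfDim {n : ℕ} (k : ℕ) (s : Set (Euc n)) : Prop :=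
  ∃ (T : Euc n ≃ᵃ[ℝ] Euc n) (V : Submodule ℝ (Euc n)), Module.finrank ℝ V = k ∧
    s = T '' (closedBall 0 1 ∩ (V : Set (Euc n)))

/-- The shadow boundary of `K` with respect to the direction submodule `D`:
the union of the touching sets of all supporting flats of `K` with direction `D`. -/
def shadowBoundary {n : ℕ} (K : Set (Euc n)) (D : Submodule ℝ (Euc n)) : Set (Euc n) :=
  ⋃ l ∈ {l : AffineSubspace ℝ (Euc n) | l.direction = D ∧
      ((l : Set (Euc n)) ∩ K).Nonempty ∧ (l : Set (Euc n)) ∩ interior K = ∅},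
    ((l : Set (Euc n)) ∩ K)

/-- `p` is a Larman point of `K`: every hyperplane section of `K` through `p` has
an `(n-2)`-plane of symmetry. -/
def IsLarmanPoint {n : ℕ} (K : Set (Euc n)) (p : Euc n) : Prop :=
  p ∈ interior K ∧ ∀ P : AffineSubspace ℝ (Euc n), IsHyperplane P → p ∈ P →
    ∃ L : AffineSubspace ℝ (Euc n), Module.finrank ℝ L.direction = n - 2 ∧
      IsSectionSymmPlane K P L

/-- `p` is a revolution point of `K`: every hyperplane section of `K` through `p` has
an `(n-2)`-plane of symmetry containing `p`. -/
def IsRevolutionPoint {n : ℕ} (K : Set (Euc n)) (p : Euc n) : Prop :=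
  p ∈ interior K ∧ ∀ P : AffineSubspace ℝ (Euc n), IsHyperplane P → p ∈ P →
    ∃ L : AffineSubspace ℝ (Euc n), Module.finrank ℝ L.direction = n - 2 ∧ p ∈ L ∧
      IsSectionSymmPlane K P L

section PartA
open Metric Set MeasureTheory Filter Topology

/-- Hadamard directional derivative. -/
def HD (F : ℂ → ℝ) (y w : ℂ) (D : ℝ) : Prop :=
  Tendsto (fun q : ℝ × ℂ => (F (y + q.1 • q.2) - F y) / q.1) (𝓝[>] 0 ×ˢ 𝓝 w) (𝓝 D)

lemma HD.comp {F : ℂ → ℝ} {y w : ℂ} {D : ℝ} (hF : HD F y w D) {ι : Type*} {l : Filter ι}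
    {t : ι → ℝ} {c : ι → ℂ} (ht : Tendsto t l (𝓝[>] 0)) (hc : Tendsto c l (𝓝 w)) :
    Tendsto (fun i => (F (y + t i • c i) - F y) / t i) l (𝓝 D) := by
  have h2 : Tendsto (fun i => (t i, c i)) l (𝓝[>] 0 ×ˢ 𝓝 w) := ht.prodMk hc
  unfold HD at hF
  have h3 := hF.comp h2
  exact h3

lemma HD.unique {F : ℂ → ℝ} {y w : ℂ} {D D' : ℝ} (h : HD F y w D) (h' : HD F y w D') : D = D' :=
  tendsto_nhds_unique h h'

lemma HD.smul_pos {F : ℂ → ℝ} {y w : ℂ} {D : ℝ} (h : HD F y w D) {c : ℝ} (hc : 0 < c) :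
    HD F y (c • w) (c * D) := by
  have h1 : Tendsto (fun q : ℝ × ℂ => c * q.1) (𝓝[>] 0 ×ˢ 𝓝 (c • w)) (𝓝[>] 0) := by
    refine tendsto_nhdsWithin_iff.2 ⟨?_, ?_⟩
    · have : Tendsto (fun q : ℝ × ℂ => c * q.1) (𝓝[>] 0 ×ˢ 𝓝 (c • w)) (𝓝 (c * 0)) :=
        (tendsto_fst.mono_right nhdsWithin_le_nhds).const_mul c
      simpa using this
    · have : ∀ᶠ x : ℝ in 𝓝[>] 0, 0 < x := self_mem_nhdsWithin
      filter_upwards [tendsto_fst.eventually this] with q hq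
      exact mul_pos hc hq
  have h2 : Tendsto (fun q : ℝ × ℂ => c⁻¹ • q.2) (𝓝[>] 0 ×ˢ 𝓝 (c • w)) (𝓝 w) := by
    have := (tendsto_snd (f := 𝓝[>] (0:ℝ)) (g := 𝓝 (c • w))).const_smul c⁻¹
    simpa [smul_smul, hc.ne'] using this
  have h3 := (h.comp h1 h2).const_mul c
  refine h3.congr fun q => ?_
  have e1 : (c * q.1) • (c⁻¹ • q.2) = q.1 • q.2 := by
    rw [smul_smul]; congr 1; field_simp
  rw [e1]
  field_simp

lemma HD.zero {F : ℂ → ℝ} {y : ℂ} {D : ℝ} (h : HD F y 0 D) : D = 0 := by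
  have := h.smul_pos (c := 2) (by norm_num)
  rw [smul_zero] at this
  have := h.unique this
  linarith

lemma HD.tendsto_self {F : ℂ → ℝ} {y w : ℂ} {D : ℝ} (h : HD F y w D) :
    Tendsto (fun q : ℝ × ℂ => F (y + q.1 • q.2)) (𝓝[>] 0 ×ˢ 𝓝 w) (𝓝 (F y)) := by
  have h1 : Tendsto (fun q : ℝ × ℂ => q.1) (𝓝[>] 0 ×ˢ 𝓝 w) (𝓝 0) :=
    tendsto_fst.mono_right nhdsWithin_le_nhds
  have h2 := (h1.mul h).add_const (F y)
  simp only [zero_mul, zero_add] at h2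
  refine h2.congr' ?_
  have : ∀ᶠ x : ℝ in 𝓝[>] 0, 0 < x := self_mem_nhdsWithin
  filter_upwards [tendsto_fst.eventually this] with q hq
  have : q.1 ≠ 0 := hq.ne'
  field_simp
  ring

lemma HD.sq {F : ℂ → ℝ} {y w : ℂ} {D : ℝ} (h : HD F y w D) :
    HD (fun x => F x ^ 2) y w (2 * F y * D) := by
  have h1 := (h.tendsto_self.add_const (F y)).mul h
  have : F y + F y = 2 * F y := by ring
  rw [this] at h1
  refine h1.congr fun q => ?_
  ring

lemma HD.sub_linear {F : ℂ → ℝ} {y w : ℂ} {D : ℝ} (h : HD F y w D) (g : ℂ →L[ℝ] ℝ) :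
    HD (fun x => F x - g x) y w (D - g w) := by
  have h1 : Tendsto (fun q : ℝ × ℂ => g q.2) (𝓝[>] 0 ×ˢ 𝓝 w) (𝓝 (g w)) :=
    (g.continuous.tendsto w).comp tendsto_snd
  refine (Tendsto.sub h h1).congr' ?_
  have : ∀ᶠ x : ℝ in 𝓝[>] 0, 0 < x := self_mem_nhdsWithin
  filter_upwards [tendsto_fst.eventually this] with q hq
  have : q.1 ≠ 0 := hq.ne'
  simp only [map_add, map_smul, smul_eq_mul]
  field_simp
  ring

lemma HD.of_hasFDerivAt {F : ℂ → ℝ} {y : ℂ} {F' : ℂ →L[ℝ] ℝ} (h : HasFDerivAt F F' y) (w : ℂ) :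
    HD F y w (F' w) := by
  have hs : ∀ᶠ q : ℝ × ℂ in 𝓝[>] 0 ×ˢ 𝓝 w, 0 < q.1 := by
    have : ∀ᶠ x : ℝ in 𝓝[>] 0, 0 < x := self_mem_nhdsWithin
    exact tendsto_fst.eventually this
  have h1 : Tendsto (fun q : ℝ × ℂ => q.1) (𝓝[>] 0 ×ˢ 𝓝 w) (𝓝 0) :=
    tendsto_fst.mono_right nhdsWithin_le_nhds
  have := (hasFDerivWithinAt_univ.2 h).lim (l := 𝓝[>] 0 ×ˢ 𝓝 w) (c := fun q : ℝ × ℂ => q.1⁻¹)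
    (d := fun q : ℝ × ℂ => q.1 • q.2) (v := w) ?_ (.of_forall fun _ => mem_univ _) ?_
  · refine this.congr fun q => ?_
    simp only [smul_eq_mul]; ring
  · simpa using h1.smul (tendsto_snd (f := 𝓝[>] (0:ℝ)) (g := 𝓝 w))
  · exact (tendsto_snd (f := 𝓝[>] (0:ℝ)) (g := 𝓝 w)).congr' (by
      filter_upwards [hs] with q hq
      rw [smul_smul, inv_mul_cancel₀ hq.ne', one_smul])

lemma HD.exists_of_concave {U : Set ℂ} (hU : IsOpen U) {W : ℂ → ℝ} (hW : ConcaveOn ℝ U W)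
    {y : ℂ} (hy : y ∈ U) (w : ℂ) : ∃ D, HD W y w D := by
  -- one-dimensional right derivative
  let A : ℝ →ᵃ[ℝ] ℂ := AffineMap.lineMap y (y + w)
  have hA : ∀ t : ℝ, A t = y + t • w := by
    intro t; simp [A, AffineMap.lineMap_apply, add_comm]
  have hcv : ConvexOn ℝ (A ⁻¹' U) ((-W) ∘ A) := hW.neg.comp_affineMap A
  have hAc : Continuous A := by
    have : (A : ℝ → ℂ) = fun t => y + t • w := funext hA
    rw [this]; fun_prop
  have h0 : (0:ℝ) ∈ interior (A ⁻¹' U) := by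
    rw [(hU.preimage hAc).interior_eq]
    simpa [hA] using hy
  have hd := hcv.hasDerivWithinAt_rightDeriv_of_mem_interior h0
  set d := derivWithin ((-W) ∘ A) (Ioi 0) 0
  rw [hasDerivWithinAt_iff_tendsto_slope' (by simp)] at hd
  obtain ⟨L, s, hs, hL⟩ := hW.locallyLipschitzOn hU hy
  rw [nhdsWithin_eq_nhds.2 (hU.mem_nhds hy)] at hs
  refine ⟨-d, ?_⟩
  have hpos : ∀ᶠ q : ℝ × ℂ in 𝓝[>] 0 ×ˢ 𝓝 w, 0 < q.1 := by
    have : ∀ᶠ x : ℝ in 𝓝[>] 0, 0 < x := self_mem_nhdsWithin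
    exact tendsto_fst.eventually this
  have h1 : Tendsto (fun q : ℝ × ℂ => q.1) (𝓝[>] 0 ×ˢ 𝓝 w) (𝓝 0) :=
    tendsto_fst.mono_right nhdsWithin_le_nhds
  have h2 : Tendsto (fun q : ℝ × ℂ => q.2) (𝓝[>] 0 ×ˢ 𝓝 w) (𝓝 w) := tendsto_snd
  have e1 : ∀ᶠ q : ℝ × ℂ in 𝓝[>] 0 ×ˢ 𝓝 w, y + q.1 • q.2 ∈ s := by
    have : Tendsto (fun q : ℝ × ℂ => y + q.1 • q.2) (𝓝[>] 0 ×ˢ 𝓝 w) (𝓝 (y + (0:ℝ) • w)) :=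
      (h1.smul h2).const_add y
    simp only [zero_smul, add_zero] at this
    exact this hs
  have e2 : ∀ᶠ q : ℝ × ℂ in 𝓝[>] 0 ×ˢ 𝓝 w, y + q.1 • w ∈ s := by
    have : Tendsto (fun q : ℝ × ℂ => y + q.1 • w) (𝓝[>] 0 ×ˢ 𝓝 w) (𝓝 (y + (0:ℝ) • w)) :=
      (h1.smul_const w).const_add y
    simp only [zero_smul, add_zero] at this
    exact this hs
  have h3 : Tendsto (fun q : ℝ × ℂ => (W (y + q.1 • w) - W y) / q.1) (𝓝[>] 0 ×ˢ 𝓝 w) (𝓝 (-d)) := by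
    have := (hd.comp (tendsto_fst (f := 𝓝[>] (0:ℝ)) (g := 𝓝 w))).neg
    refine this.congr fun q => ?_
    simp only [Function.comp, slope_def_field, Pi.neg_apply, hA]
    simp
    ring
  have h4 : Tendsto (fun q : ℝ × ℂ => (W (y + q.1 • q.2) - W (y + q.1 • w)) / q.1)
      (𝓝[>] 0 ×ˢ 𝓝 w) (𝓝 0) := by
    have h5 : Tendsto (fun q : ℝ × ℂ => (L:ℝ) * ‖q.2 - w‖) (𝓝[>] 0 ×ˢ 𝓝 w) (𝓝 0) := by
      have := ((h2.sub_const w).norm).const_mul (L:ℝ)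
      simpa using this
    refine squeeze_zero_norm' ?_ h5
    filter_upwards [hpos, e1, e2] with q hq m1 m2
    have := hL.dist_le_mul _ m1 _ m2
    rw [Real.dist_eq, dist_eq_norm] at this
    rw [norm_div, Real.norm_eq_abs, Real.norm_eq_abs, abs_of_pos hq, div_le_iff₀ hq]
    refine this.trans (le_of_eq ?_)
    rw [add_sub_add_left_eq_sub, ← smul_sub, norm_smul, Real.norm_eq_abs, abs_of_pos hq]
    ring
  have := h3.add h4
  rw [add_zero] at this
  refine this.congr fun q => ?_
  ring

lemma HD.continuous_of_forall {F : ℂ → ℝ} {y : ℂ} {N : ℂ → ℝ} (h : ∀ w, HD F y w (N w)) :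
    Continuous N := by
  rw [continuous_iff_continuousAt]
  intro w
  rw [ContinuousAt, Metric.tendsto_nhds]
  intro ε hε
  have h1 := (Metric.tendsto_nhds.1 (h w)) (ε/2) (by positivity)
  have h2 := (eventually_swap_iff.1 h1).curry
  filter_upwards [h2] with w' hw'
  have h3 : Tendsto (fun t : ℝ => (F (y + t • w') - F y) / t) (𝓝[>] 0) (𝓝 (N w')) :=
    (h w').comp tendsto_id tendsto_const_nhds
  have h4 : dist (N w') (N w) ≤ ε / 2 := by
    refine le_of_tendsto (h3.dist tendsto_const_nhds) ?_
    filter_upwards [hw'] with t ht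
    exact le_of_lt ht
  linarith

end PartA

section PartB
open Metric Set MeasureTheory Filter Topology

/-- The normalised situation: `p = 0`, the plane `H` is horizontal. -/
structure Body (K : Set (ℂ × ℝ)) (h : ℝ) (e : ℂ → ℝ → ℝ) : Prop where
  comp : IsCompact K
  conv : Convex ℝ K
  int0 : (0 : ℂ × ℝ) ∈ interior K
  refl : ∀ u : ℂ, ‖u‖ = 1 → ∀ m α z : ℝ, (α • u + (m * z) • (Complex.I * u), z) ∈ K →
    (α • u + (m * (2 * e u m - z)) • (Complex.I * u), 2 * e u m - z) ∈ K
  sym : ∀ y z, (y, z) ∈ K → (y, 2 * h - z) ∈ K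
  hne : h ≠ 0

/-- Interior of the shadow. -/
def UU (K : Set (ℂ × ℝ)) : Set ℂ := Prod.fst '' interior K

/-- Half height over a point. -/
noncomputable def WW (K : Set (ℂ × ℝ)) (h : ℝ) (y : ℂ) : ℝ := sSup {z : ℝ | (y, z) ∈ K} - h

namespace Body

variable {K : Set (ℂ × ℝ)} {h : ℝ} {e : ℂ → ℝ → ℝ}

lemma isOpen_UU (K : Set (ℂ × ℝ)) : IsOpen (UU K) := isOpenMap_fst _ isOpen_interior

lemma convex_UU (b : Body K h e) : Convex ℝ (UU K) :=
  b.conv.interior.linear_image (LinearMap.fst ℝ ℂ ℝ)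

lemma zero_mem (b : Body K h e) : (0 : ℂ) ∈ UU K := ⟨0, b.int0, rfl⟩

lemma compact_fiber (b : Body K h e) (y : ℂ) : IsCompact {z : ℝ | (y, z) ∈ K} := by
  have h1 : IsClosed {z : ℝ | (y, z) ∈ K} := b.comp.isClosed.preimage (by fun_prop)
  have h2 : IsCompact (Prod.snd '' K) := b.comp.image continuous_snd
  exact h2.of_isClosed_subset h1 (fun z hz => ⟨(y, z), hz, rfl⟩)

lemma mem_of_between (b : Body K h e) {y : ℂ} {z1 z2 z : ℝ} (h1 : (y, z1) ∈ K) (h2 : (y, z2) ∈ K)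
    (hz1 : z1 ≤ z) (hz2 : z ≤ z2) : (y, z) ∈ K := by
  have hc : Convex ℝ {z : ℝ | (y, z) ∈ K} := by
    intro a ha c hc s t hs ht hst
    have := b.conv ha hc hs ht hst
    simp only [Prod.smul_mk, Prod.mk_add_mk, ← add_smul, hst, one_smul] at this
    exact this
  exact hc.ordConnected.out h1 h2 ⟨hz1, hz2⟩

lemma top_mem (b : Body K h e) {y : ℂ} {z : ℝ} (hz : (y, z) ∈ K) :
    (y, h + WW K h y) ∈ K ∧ z ≤ h + WW K h y := by
  have h1 := (b.compact_fiber y).sSup_mem ⟨z, hz⟩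
  have h2 := le_csSup (b.compact_fiber y).bddAbove hz
  simp only [WW, add_sub_cancel]
  exact ⟨h1, h2⟩

lemma mem_abs_le (b : Body K h e) {y : ℂ} {z : ℝ} (hz : (y, z) ∈ K) : |z - h| ≤ WW K h y := by
  have h1 := (b.top_mem hz).2
  have h2 := (b.top_mem (b.sym _ _ hz)).2
  rw [abs_le]; constructor <;> linarith

lemma mem_of_abs_le (b : Body K h e) {y : ℂ} {z z' : ℝ} (hz' : (y, z') ∈ K)
    (hz : |z - h| ≤ WW K h y) : (y, z) ∈ K := by
  have h1 := (b.top_mem hz').1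
  have h2 := b.sym _ _ h1
  rw [abs_le] at hz
  exact b.mem_of_between h2 h1 (by linarith) (by linarith)

lemma mem_iff (b : Body K h e) {y : ℂ} (hy : y ∈ UU K) (z : ℝ) :
    (y, z) ∈ K ↔ |z - h| ≤ WW K h y := by
  obtain ⟨⟨y', z'⟩, hq, rfl⟩ := hy
  exact ⟨b.mem_abs_le, b.mem_of_abs_le (interior_subset hq)⟩

lemma W_pos (b : Body K h e) {y : ℂ} (hy : y ∈ UU K) : 0 < WW K h y := by
  obtain ⟨⟨y', z'⟩, hq, rfl⟩ := hy
  have hc : Continuous fun z : ℝ => (y', z) := by fun_prop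
  have : ∀ᶠ z in 𝓝 z', (y', z) ∈ interior K :=
    hc.continuousAt.eventually (isOpen_interior.mem_nhds hq)
  obtain ⟨z, hz, hzz⟩ := (this.filter_mono nhdsWithin_le_nhds |>.and
    (self_mem_nhdsWithin : ∀ᶠ z in 𝓝[>] z', z' < z)).exists
  have h1 := abs_le.1 (b.mem_abs_le (interior_subset hz))
  have h2 := abs_le.1 (b.mem_abs_le (interior_subset hq))
  simp only at *
  linarith

lemma W_concave (b : Body K h e) : ConcaveOn ℝ (UU K) (WW K h) := by
  refine ⟨b.convex_UU, ?_⟩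
  rintro _ ⟨⟨x, zx⟩, hx, rfl⟩ _ ⟨⟨y, zy⟩, hy, rfl⟩ s t hs ht hst
  have h1 := (b.top_mem (interior_subset hx)).1
  have h2 := (b.top_mem (interior_subset hy)).1
  have h3 := b.conv h1 h2 hs ht hst
  simp only [Prod.smul_mk, Prod.mk_add_mk, smul_eq_mul] at h3
  have h4 := (b.top_mem h3).2
  simp only [smul_eq_mul]
  have : s * h + t * h = h := by rw [← add_mul, hst, one_mul]
  linarith

lemma W_cont (b : Body K h e) : ContinuousOn (WW K h) (UU K) :=
  b.W_concave.continuousOn (isOpen_UU K)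

lemma smul_mem_UU (b : Body K h e) {y : ℂ} {z : ℝ} (hz : (y, z) ∈ K) {t : ℝ} (h0 : 0 ≤ t)
    (h1 : t < 1) : t • y ∈ UU K := by
  have := b.conv.combo_interior_self_mem_interior b.int0 hz (a := 1 - t) (b := t) (by linarith) h0
    (by ring)
  refine ⟨_, this, by simp⟩

lemma zero_lt_W (b : Body K h e) : |h| < WW K h 0 := by
  have hc : Continuous fun z : ℝ => ((0:ℂ), z) := by fun_prop
  have : ∀ᶠ z in 𝓝 (0:ℝ), ((0:ℂ), z) ∈ interior K :=
    hc.continuousAt.eventually (isOpen_interior.mem_nhds b.int0)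
  obtain ⟨ε, hε, hb⟩ := Metric.eventually_nhds_iff.1 this
  have h1 := abs_le.1 (b.mem_abs_le (interior_subset (hb (y := ε/2) (by
    rw [Real.dist_eq, sub_zero, abs_of_pos (by positivity)]; linarith))))
  have h2 := abs_le.1 (b.mem_abs_le (interior_subset (hb (y := -(ε/2)) (by
    rw [Real.dist_eq, sub_zero, abs_neg, abs_of_pos (by positivity)]; linarith))))
  rw [abs_lt]; constructor <;> linarith

/-- The key lemma: for small `m` the chord of the plane `(u, m)` over `α u`. -/
lemma key (b : Body K h e) {u : ℂ} (hu : ‖u‖ = 1) {α : ℝ} (hα : α • u ∈ UU K) :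
    ∃ z1 z2 : ℝ → ℝ, Tendsto z1 (𝓝 0) (𝓝 (h - WW K h (α • u))) ∧
      Tendsto z2 (𝓝 0) (𝓝 (h + WW K h (α • u))) ∧
      ∀ᶠ m in 𝓝 0, z1 m + z2 m = 2 * e u m ∧
        α • u + (m * z1 m) • (Complex.I * u) ∈ UU K ∧
        α • u + (m * z2 m) • (Complex.I * u) ∈ UU K ∧
        WW K h (α • u + (m * z1 m) • (Complex.I * u)) = h - z1 m ∧
        WW K h (α • u + (m * z2 m) • (Complex.I * u)) = z2 m - h := by
  set v := Complex.I * u with hv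
  let pt : ℝ → ℝ → ℂ := fun m z => α • u + (m * z) • v
  have hvn : ‖v‖ = 1 := by simp [hv, hu]
  let S : ℝ → Set ℝ := fun m => {z | (pt m z, z) ∈ K}
  obtain ⟨Z, hZ0, hZ⟩ : ∃ Z : ℝ, 0 < Z ∧ ∀ q ∈ K, |q.2| ≤ Z := by
    obtain ⟨Z, hZ⟩ := b.comp.isBounded.exists_norm_le
    refine ⟨max Z 1, by positivity, fun q hq => ?_⟩
    have := (norm_snd_le q).trans (hZ q hq)
    rw [Real.norm_eq_abs] at this
    exact this.trans (le_max_left _ _)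
  have hScl : ∀ m, IsCompact (S m) := by
    intro m
    have h1 : IsClosed (S m) := b.comp.isClosed.preimage (by fun_prop)
    refine (isCompact_Icc (a := -Z) (b := Z)).of_isClosed_subset h1 (fun z hz => ?_)
    exact abs_le.1 (hZ _ hz)
  obtain ⟨r, hr, hball⟩ := Metric.isOpen_iff.1 (isOpen_UU K) _ hα
  let Y := Z + |h|
  have hYpos : 0 < Y := by positivity
  have hptd : ∀ m z, dist (pt m z) (α • u) = |m| * |z| := by
    intro m z
    simp [pt, dist_eq_norm, norm_smul, hvn]
  have hsmall : ∀ᶠ m in 𝓝 (0:ℝ), ∀ z, |z| ≤ Y → pt m z ∈ UU K := by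
    have : ∀ᶠ m in 𝓝 (0:ℝ), |m| < r / Y := by
      have := Metric.ball_mem_nhds (0:ℝ) (show 0 < r / Y by positivity)
      filter_upwards [this] with m hm
      simpa using hm
    filter_upwards [this] with m hm z hz
    apply hball
    rw [mem_ball, hptd]
    calc |m| * |z| ≤ |m| * Y := by gcongr
      _ < r / Y * Y := by gcongr
      _ = r := by field_simp
  have hSY : ∀ m z, z ∈ S m → |z| ≤ Y := by
    intro m z hz
    have := hZ _ hz
    have h2 := abs_nonneg h
    simp only [Y] at *
    linarith
  have hWc := b.W_cont
  -- endpoints lie on the graph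
  have hend : ∀ᶠ m in 𝓝 (0:ℝ), h ∈ S m ∧ (∀ z ∈ S m, |z - h| < WW K h (pt m z) →
      ∀ᶠ z' in 𝓝 z, z' ∈ S m) := by
    filter_upwards [hsmall] with m hm
    constructor
    · have h1 : pt m h ∈ UU K := hm h (by simp only [Y]; linarith)
      exact (b.mem_iff h1 h).2 (by simpa using (b.W_pos h1).le)
    · intro z hz hlt
      have h1 : pt m z ∈ UU K := hm z (hSY m z hz)
      have hcpt : ContinuousAt (pt m) z := by
        have : Continuous (pt m) := by fun_prop
        exact this.continuousAt
      have hc : ContinuousAt (fun z => WW K h (pt m z)) z :=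
        ContinuousAt.comp (f := pt m) (hWc.continuousAt ((isOpen_UU K).mem_nhds h1)) hcpt
      have hc2 : ContinuousAt (fun z : ℝ => |z - h|) z := by fun_prop
      filter_upwards [hc2.eventually_lt hc hlt, hcpt.eventually ((isOpen_UU K).mem_nhds h1)]
        with z' h3 h4
      exact (b.mem_iff h4 z').2 h3.le
  have hz2 : ∀ᶠ m in 𝓝 (0:ℝ), sSup (S m) ∈ S m ∧ pt m (sSup (S m)) ∈ UU K ∧
      WW K h (pt m (sSup (S m))) = sSup (S m) - h := by
    filter_upwards [hsmall, hend] with m hm hme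
    have hmem := (hScl m).sSup_mem ⟨h, hme.1⟩
    have hge := le_csSup (hScl m).bddAbove hme.1
    refine ⟨hmem, hm _ (hSY _ _ hmem), ?_⟩
    have hle := b.mem_abs_le hmem
    rw [abs_of_nonneg (by linarith)] at hle
    refine le_antisymm (not_lt.1 fun hlt => ?_) hle
    have := hme.2 _ hmem (by rwa [abs_of_nonneg (by linarith)])
    obtain ⟨z', h1, h2⟩ := (this.filter_mono nhdsWithin_le_nhds |>.and
      (self_mem_nhdsWithin : ∀ᶠ z in 𝓝[>] (sSup (S m)), sSup (S m) < z)).exists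
    exact absurd (le_csSup (hScl m).bddAbove h1) (not_le.2 h2)
  have hz1 : ∀ᶠ m in 𝓝 (0:ℝ), sInf (S m) ∈ S m ∧ pt m (sInf (S m)) ∈ UU K ∧
      WW K h (pt m (sInf (S m))) = h - sInf (S m) := by
    filter_upwards [hsmall, hend] with m hm hme
    have hmem := (hScl m).sInf_mem ⟨h, hme.1⟩
    have hge := csInf_le (hScl m).bddBelow hme.1
    refine ⟨hmem, hm _ (hSY _ _ hmem), ?_⟩
    have hle := b.mem_abs_le hmem
    rw [abs_of_nonpos (by linarith)] at hle
    refine le_antisymm (not_lt.1 fun hlt => ?_) (by linarith)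
    have := hme.2 _ hmem (by rw [abs_of_nonpos (by linarith)]; linarith)
    obtain ⟨z', h1, h2⟩ := (this.filter_mono nhdsWithin_le_nhds |>.and
      (self_mem_nhdsWithin : ∀ᶠ z in 𝓝[<] (sInf (S m)), z < sInf (S m))).exists
    exact absurd (csInf_le (hScl m).bddBelow h1) (not_le.2 h2)
  -- convergence
  have hpt : ∀ f : ℝ → ℝ, (∀ᶠ m in 𝓝 (0:ℝ), |f m| ≤ Y) →
      Tendsto (fun m => WW K h (pt m (f m))) (𝓝 0) (𝓝 (WW K h (α • u))) := by
    intro f hf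
    have h1 : Tendsto (fun m => pt m (f m)) (𝓝 0) (𝓝 (α • u)) := by
      rw [tendsto_iff_dist_tendsto_zero]
      have h2 : Tendsto (fun m : ℝ => |m| * Y) (𝓝 0) (𝓝 0) := by
        have : Tendsto (fun m : ℝ => |m| * Y) (𝓝 0) (𝓝 (|0| * Y)) :=
          Continuous.tendsto (by fun_prop) _
        simpa using this
      refine squeeze_zero' (.of_forall fun _ => dist_nonneg) ?_ h2
      filter_upwards [hf] with m hm
      rw [hptd]; gcongr
    exact (hWc.continuousAt ((isOpen_UU K).mem_nhds hα)).tendsto.comp h1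
  refine ⟨fun m => sInf (S m), fun m => sSup (S m), ?_, ?_, ?_⟩
  · have := (hpt (fun m => sInf (S m)) (hz1.mono fun m hm => hSY _ _ hm.1)).const_sub h
    refine this.congr' ?_
    filter_upwards [hz1] with m hm
    rw [hm.2.2]; ring
  · have := (hpt (fun m => sSup (S m)) (hz2.mono fun m hm => hSY _ _ hm.1)).const_add h
    refine this.congr' ?_
    filter_upwards [hz2] with m hm
    rw [hm.2.2]; ring
  · filter_upwards [hz1, hz2] with m h1 h2
    refine ⟨?_, h1.2.1, h2.2.1, h1.2.2, h2.2.2⟩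
    have r1 : 2 * e u m - sInf (S m) ∈ S m := b.refl u hu m α _ h1.1
    have r2 : 2 * e u m - sSup (S m) ∈ S m := b.refl u hu m α _ h2.1
    have := le_csSup (hScl m).bddAbove r1
    have := csInf_le (hScl m).bddBelow r2
    linarith

end Body

end PartB

section PartC
open Metric Set MeasureTheory Filter Topology

lemma HD.smul_all {F : ℂ → ℝ} {y w : ℂ} {Dp Dm : ℝ} (hp : HD F y w Dp) (hm : HD F y (-w) Dm)
    (h0 : ∃ D, HD F y 0 D) (c : ℝ) :
    HD F y (c • w) (max c 0 * Dp + max (-c) 0 * Dm) := by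
  rcases lt_trichotomy c 0 with hc | hc | hc
  · have := hm.smul_pos (c := -c) (by linarith)
    rw [max_eq_right hc.le, max_eq_left (by linarith)]
    simpa using this
  · obtain ⟨D, hD⟩ := h0
    have := hD.zero
    subst this hc
    simpa using hD
  · have := hp.smul_pos hc
    rw [max_eq_left hc.le, max_eq_right (by linarith)]
    simpa using this

/-- Squared half height. -/
noncomputable def QQ (K : Set (ℂ × ℝ)) (h : ℝ) (y : ℂ) : ℝ := WW K h y ^ 2

namespace Body

variable {K : Set (ℂ × ℝ)} {h : ℝ} {e : ℂ → ℝ → ℝ}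

lemma exists_HD (b : Body K h e) {y : ℂ} (hy : y ∈ UU K) (w : ℂ) : ∃ D, HD (QQ K h) y w D := by
  obtain ⟨D, hD⟩ := HD.exists_of_concave (isOpen_UU K) b.W_concave hy w
  exact ⟨_, hD.sq⟩

lemma lim1 (b : Body K h e) {u : ℂ} (hu : ‖u‖ = 1) {α : ℝ} (hα : α • u ∈ UU K) (σ : ℝ)
    {B1 B2 : ℝ}
    (h1 : HD (QQ K h) (α • u) ((σ * (h - WW K h (α • u))) • (Complex.I * u)) B1)
    (h2 : HD (QQ K h) (α • u) ((σ * (h + WW K h (α • u))) • (Complex.I * u)) B2) :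
    Tendsto (fun n => 2 * (e u (σ * n) - h) / n) (𝓝[>] 0)
      (𝓝 ((B2 - B1) / (2 * WW K h (α • u)))) := by
  obtain ⟨z1, z2, hz1, hz2, hev⟩ := b.key hu hα
  set w := WW K h (α • u)
  have hw : 0 < w := b.W_pos hα
  have hσ : Tendsto (fun n : ℝ => σ * n) (𝓝[>] 0) (𝓝 0) := by
    have : Tendsto (fun n : ℝ => σ * n) (𝓝 0) (𝓝 (σ * 0)) := Continuous.tendsto (by fun_prop) _
    rw [mul_zero] at this
    exact this.mono_left nhdsWithin_le_nhds
  have c1 := hz1.comp hσ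
  have c2 := hz2.comp hσ
  have d1 := h1.comp (l := 𝓝[>] (0:ℝ)) (t := fun n => n) tendsto_id
    ((c1.const_mul σ).smul_const (Complex.I * u))
  have d2 := h2.comp (l := 𝓝[>] (0:ℝ)) (t := fun n => n) tendsto_id
    ((c2.const_mul σ).smul_const (Complex.I * u))
  have d3 := (d2.sub d1).div (c2.sub c1) (by
    have : h + w - (h - w) = 2 * w := by ring
    rw [this]; positivity)
  have : h + w - (h - w) = 2 * w := by ring
  rw [this] at d3
  refine d3.congr' ?_
  have hne : ∀ᶠ n in 𝓝[>] (0:ℝ), z2 (σ * n) - z1 (σ * n) ≠ 0 := by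
    have := (c2.sub c1).eventually_ne (b₂ := 0) (by rw [this]; positivity)
    exact this
  filter_upwards [hσ.eventually hev, hne, self_mem_nhdsWithin] with n hn hne hpos
  obtain ⟨e1, -, -, e2, e3⟩ := hn
  have hn0 : n ≠ 0 := (show (0:ℝ) < n from hpos).ne'
  simp only [Function.comp, smul_smul, QQ, Pi.div_apply]
  have t1 : n * (σ * z1 (σ * n)) = σ * n * z1 (σ * n) := by ring
  have t2 : n * (σ * z2 (σ * n)) = σ * n * z2 (σ * n) := by ring
  rw [t1, t2, e2, e3]
  have t3 : e u (σ * n) = (z1 (σ * n) + z2 (σ * n)) / 2 := by linarith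
  rw [t3]
  field_simp
  ring

/-- two-sided limit of the slope of `e`. -/
def Two (h : ℝ) (e : ℂ → ℝ → ℝ) (u : ℂ) (Λ : ℝ) : Prop :=
  Tendsto (fun n => 2 * (e u n - h) / n) (𝓝[>] 0) (𝓝 Λ) ∧
  Tendsto (fun n => 2 * (e u (-n) - h) / n) (𝓝[>] 0) (𝓝 (-Λ))

lemma two_of_HD (b : Body K h e) {u : ℂ} (hu : ‖u‖ = 1) {α : ℝ} (hα : α • u ∈ UU K) {Λ : ℝ}
    (hp : HD (QQ K h) (α • u) (Complex.I * u) Λ) (hm : HD (QQ K h) (α • u) (-(Complex.I * u)) (-Λ)) :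
    Two h e u Λ := by
  have hw := b.W_pos hα
  have hd : ∀ c : ℝ, HD (QQ K h) (α • u) (c • (Complex.I * u)) (c * Λ) := by
    intro c
    have := hp.smul_all hm (b.exists_HD hα 0) c
    convert this using 1
    rcases le_total c 0 with hc | hc
    · rw [max_eq_right hc, max_eq_left (by linarith)]; ring
    · rw [max_eq_left hc, max_eq_right (by linarith)]; ring
  constructor
  · have := b.lim1 hu hα 1 (hd _) (hd _)
    simp only [one_mul] at this
    convert this using 2
    field_simp
    ring
  · have := b.lim1 hu hα (-1) (hd _) (hd _)
    simp only [neg_mul, one_mul] at this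
    convert this using 2
    field_simp
    ring

lemma HD_of_two (b : Body K h e) {u : ℂ} (hu : ‖u‖ = 1) {α : ℝ} (hα : α • u ∈ UU K) {Λ : ℝ}
    (ht : Two h e u Λ) :
    HD (QQ K h) (α • u) (Complex.I * u) Λ ∧ HD (QQ K h) (α • u) (-(Complex.I * u)) (-Λ) := by
  have hw := b.W_pos hα
  obtain ⟨Dp, hp⟩ := b.exists_HD hα (Complex.I * u)
  obtain ⟨Dm, hm⟩ := b.exists_HD hα (-(Complex.I * u))
  have hd := hp.smul_all hm (b.exists_HD hα 0)
  have l1 := b.lim1 hu hα 1 (hd _) (hd _)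
  have l2 := b.lim1 hu hα (-1) (hd _) (hd _)
  simp only [one_mul] at l1
  simp only [neg_mul, one_mul] at l2
  have e1 := tendsto_nhds_unique ht.1 l1
  have e2 := tendsto_nhds_unique ht.2 l2
  set w := WW K h (α • u)
  rw [eq_div_iff (by positivity)] at e1 e2
  have habs : ∀ c : ℝ, max c 0 + max (-c) 0 = |c| := by
    intro c
    rcases le_total c 0 with hc | hc
    · rw [max_eq_right hc, max_eq_left (by linarith), abs_of_nonpos hc]; ring
    · rw [max_eq_left hc, max_eq_right (by linarith), abs_of_nonneg hc]; ring
  have hsub : ∀ c : ℝ, max c 0 - max (-c) 0 = c := by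
    intro c
    rcases le_total c 0 with hc | hc
    · rw [max_eq_right hc, max_eq_left (by linarith)]; ring
    · rw [max_eq_left hc, max_eq_right (by linarith)]; ring
  have hA := habs (h + w)
  have hB := habs (h - w)
  have hC := hsub (h + w)
  have hD := hsub (h - w)
  simp only [neg_neg] at e2
  set p2 := max (h + w) 0
  set q2 := max (-(h + w)) 0
  set p1 := max (h - w) 0
  set q1 := max (-(h - w)) 0
  have hsum : (|h + w| - |h - w|) * (Dp + Dm) = 0 := by
    rw [← hA, ← hB]; linear_combination (-1) * e1 - e2
  have hne : |h + w| - |h - w| ≠ 0 := by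
    intro h0
    have : |h + w| ^ 2 = |h - w| ^ 2 := by rw [sub_eq_zero.1 h0]
    rw [sq_abs, sq_abs] at this
    have : h * w = 0 := by linarith
    exact (mul_ne_zero b.hne hw.ne') this
  have hDm : Dm = -Dp := by
    have := (mul_eq_zero.1 hsum).resolve_left hne
    linarith
  have hΛ : Λ = Dp := by
    subst hDm
    have : (2 * w) * (Λ - Dp) = 0 := by
      linear_combination e1 + Dp * hC - Dp * hD
    have := (mul_eq_zero.1 this).resolve_left (by positivity)
    linarith
  subst hDm hΛ
  exact ⟨hp, hm⟩

lemma dense_diff (b : Body K h e) {V : Set ℂ} (hV : IsOpen V) (hne : (V ∩ UU K).Nonempty) :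
    ∃ y ∈ V ∩ UU K, DifferentiableAt ℝ (QQ K h) y := by
  obtain ⟨y, hyV, hyU⟩ := hne
  obtain ⟨L, s, hs, hL⟩ := b.W_concave.locallyLipschitzOn (isOpen_UU K) hyU
  rw [nhdsWithin_eq_nhds.2 ((isOpen_UU K).mem_nhds hyU)] at hs
  have hae := hL.ae_differentiableWithinAt_of_mem (μ := (volume : Measure ℂ))
  have hdense := Measure.dense_of_ae hae
  obtain ⟨x, hx1, hx2⟩ := hdense.inter_open_nonempty (interior s ∩ (V ∩ UU K))
    (isOpen_interior.inter (hV.inter (isOpen_UU K))) ⟨y, mem_interior_iff_mem_nhds.2 hs, hyV, hyU⟩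
  refine ⟨x, hx1.2, ?_⟩
  have : DifferentiableAt ℝ (WW K h) x :=
    (hx2 (interior_subset hx1.1)).differentiableAt (mem_interior_iff_mem_nhds.1 hx1.1)
  exact this.pow 2

lemma exists_unit (y : ℂ) (hy : y ≠ 0) : ∃ u : ℂ, ‖u‖ = 1 ∧ y = ‖y‖ • u := by
  have : ‖y‖ ≠ 0 := norm_ne_zero_iff.2 hy
  refine ⟨‖y‖⁻¹ • y, ?_, ?_⟩
  · rw [norm_smul, norm_inv, norm_norm, inv_mul_cancel₀ this]
  · rw [smul_smul, mul_inv_cancel₀ this, one_smul]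

lemma exists_linear (b : Body K h e) : ∃ g : ℂ →L[ℝ] ℝ, ∀ u : ℂ, ‖u‖ = 1 → Two h e u (g (Complex.I * u)) := by
  have hNW : ∀ w, ∃ D, HD (WW K h) 0 w D :=
    fun w => HD.exists_of_concave (isOpen_UU K) b.W_concave b.zero_mem w
  choose N hN using hNW
  have hNc : Continuous N := HD.continuous_of_forall hN
  have hNpos : ∀ (c : ℝ) w, 0 < c → N (c • w) = c * N w := fun c w hc =>
    (hN _).unique ((hN w).smul_pos hc)
  have hW0 := b.W_pos b.zero_mem
  -- oddness
  have hodd1 : ∀ y ∈ UU K, N (Complex.I * y) + N (-(Complex.I * y)) = 0 := by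
    intro y hy
    by_contra hcon
    have hcont : Continuous fun y => N (Complex.I * y) + N (-(Complex.I * y)) := by fun_prop
    have hopen : IsOpen {y | N (Complex.I * y) + N (-(Complex.I * y)) ≠ 0} :=
      isOpen_ne_fun hcont continuous_const
    obtain ⟨x, ⟨hxV, hxU⟩, hd⟩ := b.dense_diff hopen ⟨y, hcon, hy⟩
    apply hxV
    have hx0 : x ≠ 0 := by
      rintro rfl
      apply hxV
      have : N 0 = 0 := (hN 0).zero
      simp [this]
    obtain ⟨u, hu, hxu⟩ := exists_unit x hx0
    rw [hxu] at hxU hd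
    have q1 := HD.of_hasFDerivAt hd.hasFDerivAt (Complex.I * u)
    have q2 := HD.of_hasFDerivAt hd.hasFDerivAt (-(Complex.I * u))
    rw [map_neg] at q2
    have ht := b.two_of_HD hu hxU q1 q2
    have hz : (0:ℝ) • u ∈ UU K := by rw [zero_smul]; exact b.zero_mem
    obtain ⟨p1, p2⟩ := b.HD_of_two hu hz ht
    rw [zero_smul] at p1 p2
    have r1 := p1.unique (hN (Complex.I * u)).sq
    have r2 := p2.unique (hN (-(Complex.I * u))).sq
    have hxpos : 0 < ‖x‖ := norm_pos_iff.2 hx0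
    have s1 : Complex.I * x = ‖x‖ • (Complex.I * u) := by
      rw [← mul_smul_comm, ← hxu]
    rw [s1, ← smul_neg, hNpos _ _ hxpos, hNpos _ _ hxpos]
    have : 2 * WW K h 0 * (N (Complex.I * u) + N (-(Complex.I * u))) = 0 := by
      rw [mul_add, ← r1, ← r2]; ring
    have := (mul_eq_zero.1 this).resolve_left (by positivity)
    rw [← mul_add, this, mul_zero]
  have hodd : ∀ w, N (-w) = - N w := by
    intro w
    have h1 : ∀ᶠ t : ℝ in 𝓝[>] 0, t • (-(Complex.I * w)) ∈ UU K := by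
      have : Tendsto (fun t : ℝ => t • (-(Complex.I * w))) (𝓝 0) (𝓝 ((0:ℝ) • (-(Complex.I * w)))) :=
        Continuous.tendsto (by fun_prop) _
      rw [zero_smul] at this
      exact (this.mono_left nhdsWithin_le_nhds) ((isOpen_UU K).mem_nhds b.zero_mem)
    obtain ⟨t, ht, htp⟩ := (h1.and self_mem_nhdsWithin).exists
    have htp : 0 < t := htp
    have h2 := hodd1 _ ht
    have h3 : Complex.I * t • (-(Complex.I * w)) = t • w := by
      rw [mul_smul_comm, mul_neg, ← mul_assoc, Complex.I_mul_I]; simp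
    rw [h3, ← smul_neg, hNpos _ _ htp, hNpos _ _ htp, ← mul_add] at h2
    have := (mul_eq_zero.1 h2).resolve_left htp.ne'
    linarith
  have hsup : ∀ a c, N a + N c ≤ N (a + c) := by
    intro a c
    have hlim : ∀ w, Tendsto (fun t : ℝ => (WW K h (t • w) - WW K h 0) / t) (𝓝[>] 0) (𝓝 (N w)) := by
      intro w
      have := (hN w).comp (l := 𝓝[>] (0:ℝ)) (t := fun t => t) tendsto_id tendsto_const_nhds
      simpa using this
    have hmem : ∀ w, ∀ᶠ t : ℝ in 𝓝[>] 0, t • w ∈ UU K := by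
      intro w
      have : Tendsto (fun t : ℝ => t • w) (𝓝 0) (𝓝 ((0:ℝ) • w)) := Continuous.tendsto (by fun_prop) _
      rw [zero_smul] at this
      exact (this.mono_left nhdsWithin_le_nhds) ((isOpen_UU K).mem_nhds b.zero_mem)
    have l1 := ((hlim ((2:ℝ) • a)).add (hlim ((2:ℝ) • c))).const_mul (1/2)
    have e2 : (1/2 : ℝ) * (N ((2:ℝ) • a) + N ((2:ℝ) • c)) = N a + N c := by
      rw [hNpos _ _ two_pos, hNpos _ _ two_pos]; ring
    rw [e2] at l1
    refine le_of_tendsto_of_tendsto l1 (hlim (a + c)) ?_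
    filter_upwards [hmem ((2:ℝ) • a), hmem ((2:ℝ) • c), self_mem_nhdsWithin] with t ha hc htp
    have htp : 0 < t := htp
    have := b.W_concave.2 ha hc (show (0:ℝ) ≤ 1/2 by norm_num) (show (0:ℝ) ≤ 1/2 by norm_num)
      (by norm_num)
    have e3 : (1/2 : ℝ) • t • (2:ℝ) • a + (1/2 : ℝ) • t • (2:ℝ) • c = t • (a + c) := by
      rw [smul_add]; simp only [smul_smul]; congr 2 <;> ring
    rw [e3] at this
    simp only [smul_eq_mul] at this
    rw [← add_div, mul_div_assoc']
    gcongr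
    linarith
  have hadd : ∀ a c, N (a + c) = N a + N c := by
    intro a c
    refine le_antisymm ?_ (hsup a c)
    have := hsup (-a) (-c)
    rw [← neg_add, hodd, hodd, hodd] at this
    linarith
  have hN0 : N 0 = 0 := (hN 0).zero
  have hsmul : ∀ (c : ℝ) w, N (c • w) = c * N w := by
    intro c w
    rcases lt_trichotomy c 0 with hc | hc | hc
    · have := hNpos (-c) w (by linarith)
      rw [neg_smul, hodd] at this
      linarith
    · subst hc; simp [hN0]
    · exact hNpos c w hc
  let g0 : ℂ →ₗ[ℝ] ℝ := { toFun := fun w => 2 * WW K h 0 * N w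
                          map_add' := fun a c => by rw [hadd]; ring
                          map_smul' := fun c w => by simp only [hsmul, smul_eq_mul, RingHom.id_apply]; ring }
  refine ⟨LinearMap.toContinuousLinearMap g0, fun u hu => ?_⟩
  have hz : (0:ℝ) • u ∈ UU K := by rw [zero_smul]; exact b.zero_mem
  refine b.two_of_HD hu hz ?_ ?_
  · rw [zero_smul]; exact (hN (Complex.I * u)).sq
  · rw [zero_smul, ← map_neg]; exact (hN (-(Complex.I * u))).sq

end Body

end PartC

section PartD
open Metric Set MeasureTheory Filter Topology

namespace Body

variable {K : Set (ℂ × ℝ)} {h : ℝ} {e : ℂ → ℝ → ℝ}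

lemma Q_cont (b : Body K h e) : ContinuousOn (QQ K h) (UU K) := b.W_cont.pow 2

lemma R_cont (b : Body K h e) (g : ℂ →L[ℝ] ℝ) : ContinuousOn (fun y => QQ K h y - g y) (UU K) :=
  b.Q_cont.sub g.continuous.continuousOn

lemma unit_exp {u : ℂ} (hu : ‖u‖ = 1) (θ : ℝ) : ‖Complex.exp (θ * Complex.I) * u‖ = 1 := by
  rw [norm_mul, Complex.norm_exp_ofReal_mul_I, hu, one_mul]

lemma arc_aux (b : Body K h e) {g : ℂ →L[ℝ] ℝ}
    (hg : ∀ u : ℂ, ‖u‖ = 1 → Two h e u (g (Complex.I * u))) {u : ℂ} (hu : ‖u‖ = 1) {r a c : ℝ}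
    (hac : a ≤ c) (hU : ∀ θ ∈ Icc a c, r • (Complex.exp (θ * Complex.I) * u) ∈ UU K) :
    QQ K h (r • (Complex.exp (c * Complex.I) * u)) - g (r • (Complex.exp (c * Complex.I) * u)) =
    QQ K h (r • (Complex.exp (a * Complex.I) * u)) - g (r • (Complex.exp (a * Complex.I) * u)) := by
  let R : ℂ → ℝ := fun y => QQ K h y - g y
  let f : ℝ → ℝ := fun θ => R (r • (Complex.exp (θ * Complex.I) * u))
  have hfc : ContinuousOn f (Icc a c) := by
    refine (b.R_cont g).comp (f := fun θ : ℝ => r • (Complex.exp (θ * Complex.I) * u)) ?_ hU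
    fun_prop
  have := constant_of_has_deriv_right_zero hfc ?_ c ⟨hac, le_rfl⟩
  · exact this
  intro θ hθ
  set u' := Complex.exp (θ * Complex.I) * u with hu'
  have hn := unit_exp hu θ
  have hm : r • u' ∈ UU K := hU θ ⟨hθ.1, hθ.2.le⟩
  obtain ⟨h1, h2⟩ := b.HD_of_two hn hm (hg _ hn)
  have h3 := h1.sub_linear g
  have h4 := h2.sub_linear g
  rw [map_neg] at h4
  rw [sub_self] at h3 h4
  have h0 : ∃ D, HD R (r • u') 0 D := by
    obtain ⟨D, hD⟩ := b.exists_HD hm 0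
    exact ⟨_, hD.sub_linear g⟩
  have h5 := h3.smul_all h4 h0 r
  rw [mul_zero, mul_zero, add_zero] at h5
  rw [← hasDerivWithinAt_Ioi_iff_Ici, hasDerivWithinAt_iff_tendsto_slope' (by simp)]
  have ht : Tendsto (fun x : ℝ => x - θ) (𝓝[>] θ) (𝓝[>] 0) := by
    refine tendsto_nhdsWithin_iff.2 ⟨?_, ?_⟩
    · have : Tendsto (fun x : ℝ => x - θ) (𝓝 θ) (𝓝 (θ - θ)) := Continuous.tendsto (by fun_prop) _
      rw [sub_self] at this
      exact this.mono_left nhdsWithin_le_nhds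
    · filter_upwards [self_mem_nhdsWithin] with x hx
      exact sub_pos.2 (show θ < x from hx)
  have hder : HasDerivAt (fun x : ℝ => r • (Complex.exp (x * Complex.I) * u))
      (r • (Complex.I * u')) θ := by
    have h6 : HasDerivAt (fun x : ℝ => Complex.exp (x * Complex.I))
        (Complex.exp (θ * Complex.I) * (1 * Complex.I)) θ := by
      have : HasDerivAt (fun x : ℝ => (x : ℂ) * Complex.I) (1 * Complex.I) θ :=
        (Complex.ofRealCLM.hasDerivAt (x := θ)).mul_const Complex.I
      exact this.cexp
    have h7 := (h6.mul_const u).const_smul r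
    have h9 : r • (Complex.I * u') = r • (Complex.exp (θ * Complex.I) * (1 * Complex.I) * u) := by
      rw [hu']; congr 1; ring
    rw [h9]; exact h7
  have hc := (hasDerivWithinAt_iff_tendsto_slope' (s := Ioi θ) (by simp)).1 hder.hasDerivWithinAt
  have h8 := h5.comp ht hc
  refine h8.congr' ?_
  filter_upwards [self_mem_nhdsWithin] with x hx
  have hx : x - θ ≠ 0 := (sub_pos.2 (show θ < x from hx)).ne'
  rw [slope_def_field, slope_def_module, smul_smul, mul_inv_cancel₀ hx, one_smul]
  simp only [f]
  rw [← hu', add_sub_cancel]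

lemma arc (b : Body K h e) {g : ℂ →L[ℝ] ℝ}
    (hg : ∀ u : ℂ, ‖u‖ = 1 → Two h e u (g (Complex.I * u))) {u : ℂ} (hu : ‖u‖ = 1) {r c : ℝ}
    (hU : ∀ θ : ℝ, |θ| ≤ |c| → r • (Complex.exp (θ * Complex.I) * u) ∈ UU K) :
    QQ K h (r • (Complex.exp (c * Complex.I) * u)) - g (r • (Complex.exp (c * Complex.I) * u)) =
    QQ K h (r • u) - g (r • u) := by
  rcases le_total 0 c with hc | hc
  · have := b.arc_aux hg hu (r := r) hc (fun θ hθ => hU θ (by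
      rw [abs_of_nonneg hθ.1, abs_of_nonneg hc]; exact hθ.2))
    simpa using this
  · have := b.arc_aux hg hu (r := r) hc (fun θ hθ => hU θ (by
      rw [abs_of_nonpos hθ.2, abs_of_nonpos hc]; linarith [hθ.1]))
    simpa using this.symm

lemma polar {u : ℂ} {α s : ℝ} (hα : 0 < α) :
    (α * √(1 + (s / α) ^ 2)) • (Complex.exp ((Real.arctan (s / α) : ℝ) * Complex.I) * u) =
      α • u + s • (Complex.I * u) := by
  have hp : 0 < √(1 + (s / α) ^ 2) := by positivity
  rw [Complex.exp_mul_I, ← Complex.ofReal_cos, ← Complex.ofReal_sin, Real.cos_arctan,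
    Real.sin_arctan]
  set q := √(1 + (s / α) ^ 2)
  simp only [Complex.real_smul]
  have hq : (q : ℂ) ≠ 0 := by exact_mod_cast hp.ne'
  have ha : (α : ℂ) ≠ 0 := by exact_mod_cast hα.ne'
  push_cast
  field_simp

lemma ray_lim (b : Body K h e) {g : ℂ →L[ℝ] ℝ}
    (hg : ∀ u : ℂ, ‖u‖ = 1 → Two h e u (g (Complex.I * u))) {u : ℂ} (hu : ‖u‖ = 1) {α D : ℝ}
    (hα0 : 0 < α) (hα : α • u ∈ UU K) (hD : HD (fun y => QQ K h y - g y) (α • u) u D) :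
    Tendsto (fun n => (2 * (e u n - h) - n * g (Complex.I * u)) / n ^ 2) (𝓝[>] 0)
      (𝓝 (h * D / α)) := by
  obtain ⟨z1, z2, hz1, hz2, hev⟩ := b.key hu hα
  have hw : 0 < WW K h (α • u) := b.W_pos hα
  set w := WW K h (α • u)
  set R : ℂ → ℝ := fun y => QQ K h y - g y with hR
  -- a box in polar coordinates
  have hbox : ∀ᶠ q : ℝ × ℝ in 𝓝 (α, (0:ℝ)), q.1 • (Complex.exp (q.2 * Complex.I) * u) ∈ UU K := by
    have hc : Continuous fun q : ℝ × ℝ => q.1 • (Complex.exp (q.2 * Complex.I) * u) := by fun_prop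
    refine hc.continuousAt.eventually ((isOpen_UU K).mem_nhds ?_)
    simpa using hα
  obtain ⟨ε, hε, hbox⟩ := Metric.eventually_nhds_iff.1 hbox
  have hall : ∀ c : ℝ, HD R (α • u) (c • u) (max c 0 * D + max (-c) 0 * _) := fun c => by
    obtain ⟨D0, hD0⟩ := b.exists_HD hα 0
    exact hD.smul_all ((b.exists_HD hα (-u)).choose_spec.sub_linear g) ⟨_, hD0.sub_linear g⟩ c
  have hn0 : Tendsto (fun n : ℝ => n) (𝓝[>] 0) (𝓝 0) := tendsto_id.mono_left nhdsWithin_le_nhds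
  have main : ∀ (z : ℝ → ℝ) (z0 : ℝ), Tendsto z (𝓝 0) (𝓝 z0) →
      Tendsto (fun n => (R (α • u + (n * z n) • (Complex.I * u)) - R (α • u)) / n ^ 2) (𝓝[>] 0)
        (𝓝 (z0 ^ 2 / (2 * α) * D)) := by
    intro z z0 hz
    have hz' : Tendsto z (𝓝[>] 0) (𝓝 z0) := hz.mono_left nhdsWithin_le_nhds
    have hs : Tendsto (fun n => n * z n / α) (𝓝[>] 0) (𝓝 0) := by
      have := (hn0.mul hz').div_const α
      simpa using this
    let r : ℝ → ℝ := fun n => α * √(1 + (n * z n / α) ^ 2)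
    have hr : Tendsto r (𝓝[>] 0) (𝓝 α) := by
      have hc : Continuous fun x : ℝ => α * √(1 + x ^ 2) := by fun_prop
      have := (hc.tendsto 0).comp hs
      have h0 : α * √(1 + 0 ^ 2) = α := by simp
      rw [h0] at this
      exact this
    let th : ℝ → ℝ := fun n => Real.arctan (n * z n / α)
    have hth : Tendsto th (𝓝[>] 0) (𝓝 0) := by
      have := (Real.continuous_arctan.tendsto 0).comp hs
      rw [Real.arctan_zero] at this
      exact this
    have hrpos : ∀ n, 0 < r n := fun n => by positivity
    have hrsq : ∀ n, (r n) ^ 2 = α ^ 2 + n ^ 2 * (z n) ^ 2 := by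
      intro n
      simp only [r]
      rw [mul_pow, Real.sq_sqrt (by positivity)]
      field_simp
    have hre : ∀ n, r n = α + n ^ 2 * ((z n) ^ 2 / (r n + α)) := by
      intro n
      have h1 : r n + α ≠ 0 := by have := hrpos n; positivity
      field_simp
      linear_combination hrsq n
    have hc : Tendsto (fun n => (z n) ^ 2 / (r n + α)) (𝓝[>] 0) (𝓝 (z0 ^ 2 / (2 * α))) := by
      have := (hz'.pow 2).div (hr.add_const α) (by positivity)
      rw [← two_mul] at this
      exact this
    have hHD : HD R (α • u) ((z0 ^ 2 / (2 * α)) • u) (z0 ^ 2 / (2 * α) * D) := by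
      have := hall (z0 ^ 2 / (2 * α))
      have hnn : 0 ≤ z0 ^ 2 / (2 * α) := by positivity
      rw [max_eq_left hnn, max_eq_right (by linarith), zero_mul, add_zero] at this
      exact this
    have ht : Tendsto (fun n : ℝ => n ^ 2) (𝓝[>] 0) (𝓝[>] 0) := by
      refine tendsto_nhdsWithin_iff.2 ⟨?_, ?_⟩
      · simpa using hn0.pow 2
      · filter_upwards [self_mem_nhdsWithin] with x hx
        exact pow_pos (show (0:ℝ) < x from hx) 2
    have hlim := hHD.comp ht (hc.smul_const u)
    refine hlim.congr' ?_
    have e1 : ∀ᶠ n in 𝓝[>] (0:ℝ), dist (r n) α < ε := Metric.tendsto_nhds.1 hr ε hε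
    have e2 : ∀ᶠ n in 𝓝[>] (0:ℝ), dist (th n) 0 < ε := Metric.tendsto_nhds.1 hth ε hε
    filter_upwards [e1, e2] with n h1 h2
    have h3 := b.arc hg hu (r := r n) (c := th n) (fun θ hθ => by
      refine hbox (y := (r n, θ)) ?_
      rw [Prod.dist_eq]
      refine max_lt h1 ?_
      rw [Real.dist_eq, sub_zero] at h2 ⊢
      exact lt_of_le_of_lt hθ h2)
    have h4 : r n • (Complex.exp ((th n : ℝ) * Complex.I) * u) =
      α • u + (n * z n) • (Complex.I * u) := polar hα0
    rw [h4] at h3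
    have h5 : R (α • u + (n * z n) • (Complex.I * u)) = R (r n • u) := h3
    rw [h5, smul_smul, ← add_smul, ← hre n]
  have d1 := main z1 _ hz1
  have d2 := main z2 _ hz2
  have c1 : Tendsto z1 (𝓝[>] 0) _ := hz1.mono_left nhdsWithin_le_nhds
  have c2 : Tendsto z2 (𝓝[>] 0) _ := hz2.mono_left nhdsWithin_le_nhds
  have hww : h + w - (h - w) = 2 * w := by ring
  have d3 := (d2.sub d1).div (c2.sub c1) (by rw [hww]; positivity)
  have hval : ((h + w) ^ 2 / (2 * α) * D - (h - w) ^ 2 / (2 * α) * D) / (h + w - (h - w)) =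
      h * D / α := by
    rw [hww]; field_simp; ring
  rw [hval] at d3
  refine d3.congr' ?_
  have hne : ∀ᶠ n in 𝓝[>] (0:ℝ), z2 n - z1 n ≠ 0 :=
    (c2.sub c1).eventually_ne (b₂ := 0) (by rw [hww]; positivity)
  filter_upwards [hn0.eventually hev, hne, self_mem_nhdsWithin] with n hn hne hpos
  obtain ⟨e1, -, -, e2, e3⟩ := hn
  have hn0 : n ≠ 0 := (show (0:ℝ) < n from hpos).ne'
  simp only [Pi.div_apply, hR, QQ, map_add, map_smul, smul_eq_mul]
  rw [e2, e3]
  have t3 : e u n = (z1 n + z2 n) / 2 := by linarith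
  rw [t3]
  field_simp
  ring

lemma exists_ray (b : Body K h e) {g : ℂ →L[ℝ] ℝ}
    (hg : ∀ u : ℂ, ‖u‖ = 1 → Two h e u (g (Complex.I * u))) {u : ℂ} (hu : ‖u‖ = 1) :
    ∃ k : ℝ, ∀ a : ℝ, 0 < a → a • u ∈ UU K → QQ K h (a • u) - g (a • u) = QQ K h 0 + k * a ^ 2 := by
  have hseg : ∀ a c : ℝ, a • u ∈ UU K → 0 ≤ c → c ≤ a → c • u ∈ UU K := by
    intro a c ha hc hca
    rcases hc.eq_or_lt with h0 | h0
    · rw [← h0, zero_smul]; exact b.zero_mem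
    have ha0 : 0 < a := by linarith
    have := b.convex_UU.smul_mem_of_zero_mem b.zero_mem ha (t := c / a)
      ⟨by positivity, (div_le_one ha0).2 hca⟩
    rw [smul_smul] at this
    convert this using 2
    field_simp
  have hsmall : ∀ᶠ t : ℝ in 𝓝[>] 0, t • u ∈ UU K := by
    have : Tendsto (fun t : ℝ => t • u) (𝓝 0) (𝓝 ((0:ℝ) • u)) := Continuous.tendsto (by fun_prop) _
    rw [zero_smul] at this
    exact (this.mono_left nhdsWithin_le_nhds) ((isOpen_UU K).mem_nhds b.zero_mem)
  obtain ⟨α0, hα0U, hα0⟩ := (hsmall.and self_mem_nhdsWithin).exists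
  have hα0 : 0 < α0 := hα0
  have hex : ∀ α : ℝ, α • u ∈ UU K → ∃ D, HD (fun y => QQ K h y - g y) (α • u) u D := by
    intro α hα
    obtain ⟨D, hD⟩ := b.exists_HD hα u
    exact ⟨_, hD.sub_linear g⟩
  obtain ⟨D0, hD0⟩ := hex α0 hα0U
  have hD : ∀ α : ℝ, 0 < α → α • u ∈ UU K →
      HD (fun y => QQ K h y - g y) (α • u) u (2 * (D0 / (2 * α0)) * α) := by
    intro α hα hαU
    obtain ⟨D, hD⟩ := hex α hαU
    have := tendsto_nhds_unique (b.ray_lim hg hu hα hαU hD) (b.ray_lim hg hu hα0 hα0U hD0)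
    have hne := b.hne
    have : D = 2 * (D0 / (2 * α0)) * α := by
      field_simp at this ⊢
      linarith
    rwa [← this]
  set k := D0 / (2 * α0)
  refine ⟨k, fun a ha haU => ?_⟩
  let f : ℝ → ℝ := fun x => (QQ K h (x • u) - g (x • u)) - k * x ^ 2
  have hfc : ContinuousOn f (Icc 0 a) := by
    refine ContinuousOn.sub ?_ (by fun_prop)
    refine (b.R_cont g).comp (f := fun x : ℝ => x • u) (by fun_prop) ?_
    intro x hx
    exact hseg a x haU hx.1 hx.2
  have hconst : ∀ c : ℝ, 0 < c → c ≤ a → f a = f c := by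
    intro c hc hca
    refine constant_of_has_deriv_right_zero (hfc.mono (Icc_subset_Icc_left hc.le)) ?_ a ⟨hca, le_rfl⟩
    intro x hx
    have hx0 : 0 < x := lt_of_lt_of_le hc hx.1
    have hxU := hseg a x haU hx0.le hx.2.le
    have h1 := hD x hx0 hxU
    have h2 : HasDerivWithinAt (fun x => QQ K h (x • u) - g (x • u)) (2 * k * x) (Ici x) x := by
      rw [← hasDerivWithinAt_Ioi_iff_Ici, hasDerivWithinAt_iff_tendsto_slope' (by simp)]
      have ht : Tendsto (fun y : ℝ => y - x) (𝓝[>] x) (𝓝[>] 0) := by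
        refine tendsto_nhdsWithin_iff.2 ⟨?_, ?_⟩
        · have : Tendsto (fun y : ℝ => y - x) (𝓝 x) (𝓝 (x - x)) := Continuous.tendsto (by fun_prop) _
          rw [sub_self] at this
          exact this.mono_left nhdsWithin_le_nhds
        · filter_upwards [self_mem_nhdsWithin] with y hy
          exact sub_pos.2 (show x < y from hy)
      refine (h1.comp ht tendsto_const_nhds).congr fun y => ?_
      rw [slope_def_field, ← add_smul, add_sub_cancel]
    have h3 : HasDerivWithinAt (fun x : ℝ => k * x ^ 2) (k * (2 * x)) (Ici x) x := by
      have := ((hasDerivAt_pow 2 x).const_mul k).hasDerivWithinAt (s := Ici x)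
      simpa using this
    have := h2.sub h3
    have e0 : 2 * k * x - k * (2 * x) = 0 := by ring
    rw [e0] at this
    exact this
  have hlim : Tendsto f (𝓝[>] 0) (𝓝 (f 0)) := by
    have h1 := (hfc 0 ⟨le_rfl, ha.le⟩)
    have h2 : Tendsto f (𝓝[Ioc 0 a] 0) (𝓝 (f 0)) := h1.mono Ioc_subset_Icc_self
    rwa [nhdsWithin_Ioc_eq_nhdsGT ha] at h2
  have hlim2 : Tendsto f (𝓝[>] 0) (𝓝 (f a)) := by
    refine tendsto_const_nhds.congr' ?_
    filter_upwards [Ioc_mem_nhdsGT ha] with c hc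
    exact hconst c hc.1 hc.2
  have := tendsto_nhds_unique hlim hlim2
  simp only [f] at this
  simp only [zero_smul, map_zero] at this
  linarith

lemma quadratic (b : Body K h e) : ∃ (g : ℂ →L[ℝ] ℝ) (k : ℝ), ∀ y ∈ UU K,
    QQ K h y = QQ K h 0 + g y + k * ‖y‖ ^ 2 := by
  obtain ⟨g, hg⟩ := b.exists_linear
  have := fun (u : ℂ) (hu : ‖u‖ = 1) => b.exists_ray hg hu
  choose! k hk using this
  obtain ⟨ρ, hρ, hball⟩ := Metric.isOpen_iff.1 (isOpen_UU K) _ b.zero_mem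
  have hsm : ∀ u : ℂ, ‖u‖ = 1 → (ρ / 2) • u ∈ UU K := by
    intro u hu
    apply hball
    rw [mem_ball, dist_zero_right, norm_smul, hu, Real.norm_eq_abs, abs_of_pos (by positivity)]
    linarith
  have hk1 : ∀ u : ℂ, ‖u‖ = 1 → k u = k 1 := by
    intro u hu
    have hu' : Complex.exp ((Complex.arg u : ℝ) * Complex.I) * 1 = u := by
      have := Complex.norm_mul_exp_arg_mul_I u
      rw [hu] at this
      simpa using this
    have h1 : ‖(1:ℂ)‖ = 1 := norm_one
    have h2 := b.arc hg h1 (r := ρ / 2) (c := Complex.arg u)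
      (fun θ _ => hsm _ (unit_exp h1 θ))
    rw [hu'] at h2
    rw [hk u hu (ρ / 2) (by positivity) (hsm u hu), hk 1 h1 (ρ / 2) (by positivity) (hsm 1 h1)] at h2
    have : (ρ / 2) ^ 2 ≠ 0 := by positivity
    exact mul_right_cancel₀ this (by linarith)
  refine ⟨g, k 1, fun y hy => ?_⟩
  by_cases hy0 : y = 0
  · subst hy0; simp
  obtain ⟨u, hu, hyu⟩ := exists_unit y hy0
  have h1 := hk u hu ‖y‖ (norm_pos_iff.2 hy0) (by rwa [← hyu])
  rw [← hyu, hk1 u hu] at h1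
  linarith

end Body

end PartD

section PartE
open Set Filter Topology Metric

namespace Body

variable {K : Set (ℂ × ℝ)} {h : ℝ} {e : ℂ → ℝ → ℝ}

lemma le_P (b : Body K h e) {P : ℂ → ℝ} (hc : Continuous P) (hP : ∀ y ∈ UU K, QQ K h y = P y)
    {y : ℂ} {z : ℝ} (hz : (y, z) ∈ K) : (z - h) ^ 2 ≤ P y := by
  have key : ∀ t : ℝ, 0 ≤ t → t < 1 → (t * z - h) ^ 2 ≤ P (t • y) := by
    intro t h0 h1
    have hU := b.smul_mem_UU hz h0 h1
    have hm : (t • y, t * z) ∈ K := by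
      have := b.conv.smul_mem_of_zero_mem (interior_subset b.int0) hz (t := t) ⟨h0, h1.le⟩
      simpa using this
    rw [← hP _ hU]
    exact sq_le_sq.2 (by rw [abs_of_pos (b.W_pos hU)]; exact b.mem_abs_le hm)
  have l1 : Tendsto (fun t : ℝ => (t * z - h) ^ 2) (𝓝[<] 1) (𝓝 ((1 * z - h) ^ 2)) :=
    (Continuous.tendsto (by fun_prop) _).mono_left nhdsWithin_le_nhds
  have l2 : Tendsto (fun t : ℝ => P (t • y)) (𝓝[<] 1) (𝓝 (P ((1:ℝ) • y))) :=
    (Continuous.tendsto (by fun_prop) _).mono_left nhdsWithin_le_nhds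
  have := le_of_tendsto_of_tendsto l1 l2 (by
    filter_upwards [Ioo_mem_nhdsLT (show (0:ℝ) < 1 by norm_num)] with t ht
    exact key t ht.1.le ht.2)
  simpa using this

lemma mem_of_lt_P (b : Body K h e) {P : ℂ → ℝ} (hc : Continuous P)
    (hP : ∀ y ∈ UU K, QQ K h y = P y)
    {y : ℂ} {z z' : ℝ} (hz' : (y, z') ∈ K) (hz : (z - h) ^ 2 < P y) : (y, z) ∈ K := by
  have l2 : Tendsto (fun t : ℝ => P (t • y)) (𝓝[<] 1) (𝓝 (P ((1:ℝ) • y))) :=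
    (Continuous.tendsto (by fun_prop) _).mono_left nhdsWithin_le_nhds
  rw [one_smul] at l2
  have l3 : Tendsto (fun t : ℝ => (t • y, z)) (𝓝[<] 1) (𝓝 ((1:ℝ) • y, z)) :=
    (Continuous.tendsto (by fun_prop) _).mono_left nhdsWithin_le_nhds
  rw [one_smul] at l3
  refine b.comp.isClosed.mem_of_tendsto l3 ?_
  filter_upwards [Ioo_mem_nhdsLT (show (0:ℝ) < 1 by norm_num), l2.eventually (lt_mem_nhds hz)]
    with t ht h1
  have hU := b.smul_mem_UU hz' ht.1.le ht.2
  rw [b.mem_iff hU, ← abs_of_pos (b.W_pos hU), ← sq_le_sq]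
  rw [← hP _ hU] at h1
  exact h1.le

lemma mem_of_le_P (b : Body K h e) {P : ℂ → ℝ} (hc : Continuous P)
    (hP : ∀ y ∈ UU K, QQ K h y = P y)
    {y : ℂ} {z z' : ℝ} (hz' : (y, z') ∈ K) (hz : (z - h) ^ 2 ≤ P y) : (y, z) ∈ K := by
  rcases eq_or_ne z h with rfl | hne
  · refine b.mem_of_abs_le hz' ?_
    rw [sub_self, abs_zero]
    exact (abs_nonneg _).trans (b.mem_abs_le hz')
  have hpos : 0 < (z - h) ^ 2 := by
    have := sub_ne_zero.2 hne
    positivity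
  have l3 : Tendsto (fun t : ℝ => (y, h + t * (z - h))) (𝓝[<] 1) (𝓝 (y, h + 1 * (z - h))) :=
    (Continuous.tendsto (by fun_prop) _).mono_left nhdsWithin_le_nhds
  rw [one_mul, add_sub_cancel] at l3
  refine b.comp.isClosed.mem_of_tendsto l3 ?_
  filter_upwards [Ioo_mem_nhdsLT (show (0:ℝ) < 1 by norm_num)] with t ht
  refine b.mem_of_lt_P hc hP hz' ?_
  have : t ^ 2 < 1 := by nlinarith [ht.1, ht.2]
  nlinarith

lemma decomp {u : ℂ} (hu : ‖u‖ = 1) (x : ℂ) :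
    x = ((starRingEnd ℂ u) * x).re • u + ((starRingEnd ℂ u) * x).im • (Complex.I * u) := by
  have h1 : u * (starRingEnd ℂ u) = 1 := by
    rw [Complex.mul_conj, Complex.normSq_eq_norm_sq, hu]; simp
  have h2 := Complex.re_add_im ((starRingEnd ℂ u) * x)
  simp only [Complex.real_smul]
  calc x = (u * (starRingEnd ℂ u)) * x := by rw [h1, one_mul]
    _ = u * ((starRingEnd ℂ u) * x) := by ring
    _ = u * ((((starRingEnd ℂ u) * x).re : ℂ) + (((starRingEnd ℂ u) * x).im : ℂ) * Complex.I) := by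
      rw [h2]
    _ = _ := by ring

lemma comp_re {u : ℂ} (hu : ‖u‖ = 1) (a c : ℝ) :
    ((starRingEnd ℂ u) * (a • u + c • (Complex.I * u))).re = a := by
  have h1 : (starRingEnd ℂ u) * u = 1 := by
    rw [mul_comm, Complex.mul_conj, Complex.normSq_eq_norm_sq, hu]; simp
  have : (starRingEnd ℂ u) * (a • u + c • (Complex.I * u)) = (a : ℂ) + (c : ℂ) * Complex.I := by
    simp only [Complex.real_smul]
    linear_combination ((a : ℂ) + (c : ℂ) * Complex.I) * h1
  rw [this]; simp

/-- one step of the wall argument -/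
lemma wall_step (b : Body K h e) {u y0 : ℂ} (hu : ‖u‖ = 1) {ρ m α : ℝ} (hm : m ≠ 0)
    (hρ : ∀ y z z', (y, z') ∈ K → dist y y0 < ρ → |z - h| < ρ → (y, z) ∈ K)
    (he : |e u m - h| < ρ)
    (hmem : α • u + (m * e u m) • (Complex.I * u) ∈ Prod.fst '' K)
    (hmax : ∀ β : ℝ, β • u + (m * e u m) • (Complex.I * u) ∈ Prod.fst '' K → β ≤ α)
    (hd : dist (α • u + (m * e u m) • (Complex.I * u)) y0 < ρ)
    {x : ℂ} (hx : x ∈ Prod.fst '' K) : ((starRingEnd ℂ u) * x).re ≤ α := by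
  have hconv : Convex ℝ (Prod.fst '' K) := b.conv.linear_image (LinearMap.fst ℝ ℂ ℝ)
  by_contra! hlt
  set a := ((starRingEnd ℂ u) * x).re with ha
  set c := ((starRingEnd ℂ u) * x).im with hc
  have hxd : x = a • u + c • (Complex.I * u) := decomp hu x
  set E := e u m with hE
  let Y : ℝ → ℂ := fun t => (α + t * (a - α)) • u + (m * (E + t * ((c - m * E) / m))) • (Complex.I * u)
  have hY : ∀ t, Y t = (1 - t) • (α • u + (m * E) • (Complex.I * u)) + t • x := by
    intro t
    rw [hxd]
    have : m * (E + t * ((c - m * E) / m)) = (1 - t) * (m * E) + t * c := by field_simp; ring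
    simp only [Y]
    rw [this]
    module
  have l1 : Tendsto (fun t => dist (Y t) y0) (𝓝[>] 0) (𝓝 (dist (Y 0) y0)) :=
    (Continuous.tendsto (by fun_prop) _).mono_left nhdsWithin_le_nhds
  have l2 : Tendsto (fun t => |(E + t * ((c - m * E) / m)) - h|) (𝓝[>] 0)
      (𝓝 |(E + 0 * ((c - m * E) / m)) - h|) :=
    (Continuous.tendsto (by fun_prop) _).mono_left nhdsWithin_le_nhds
  have e1 : ∀ᶠ t in 𝓝[>] (0:ℝ), dist (Y t) y0 < ρ := l1.eventually (gt_mem_nhds (by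
    rw [hY]; simpa using hd))
  have e2 : ∀ᶠ t in 𝓝[>] (0:ℝ), |(E + t * ((c - m * E) / m)) - h| < ρ :=
    l2.eventually (gt_mem_nhds (by simpa using he))
  obtain ⟨t, h1, h2, ht⟩ := (e1.and (e2.and (Ioo_mem_nhdsGT (show (0:ℝ) < 1 by norm_num)))).exists
  have hYB : Y t ∈ Prod.fst '' K := by
    rw [hY]
    exact hconv hmem hx (by linarith [ht.2]) ht.1.le (by ring)
  obtain ⟨⟨_, z'⟩, hq, rfl⟩ := id hYB
  have h3 := hρ _ _ _ hq h1 h2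
  have h4 := b.refl u hu m _ _ h3
  have h5 : (α + t * (a - α)) • u +
      (m * (2 * e u m - (E + t * ((c - m * E) / m)))) • (Complex.I * u) ∈ Prod.fst '' K :=
    ⟨_, h4, rfl⟩
  have h6 := hconv hYB h5 (a := 1/2) (b := 1/2) (by norm_num) (by norm_num) (by norm_num)
  have h7 := hmax (α + t * (a - α)) (by
    convert h6 using 1
    simp only [Y]
    rw [← hE]
    module)
  nlinarith [ht.1]

lemma e_lim (b : Body K h e) {u : ℂ} (hu : ‖u‖ = 1) : Tendsto (e u) (𝓝 0) (𝓝 h) := by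
  obtain ⟨z1, z2, h1, h2, hev⟩ := b.key hu (α := 0) (by rw [zero_smul]; exact b.zero_mem)
  have h3 := (h1.add h2).div_const 2
  have : (h - WW K h ((0:ℝ) • u) + (h + WW K h ((0:ℝ) • u))) / 2 = h := by ring
  rw [this] at h3
  refine h3.congr' ?_
  filter_upwards [hev] with m hm
  rw [hm.1]; ring

lemma UU_sub (K : Set (ℂ × ℝ)) : UU K ⊆ Prod.fst '' K := image_mono interior_subset

lemma wall (b : Body K h e) {P : ℂ → ℝ} (hc : Continuous P)
    (hP : ∀ y ∈ UU K, QQ K h y = P y) {u : ℂ} (hu : ‖u‖ = 1) {α0 : ℝ} (hα0 : 0 < α0)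
    (hy0 : α0 • u ∈ Prod.fst '' K) (hy1 : α0 • u ∉ UU K) (hpos : 0 < P (α0 • u)) :
    (∀ x ∈ Prod.fst '' K, ((starRingEnd ℂ u) * x).re ≤ α0) ∧
    ∀ᶠ m in 𝓝[≠] (0:ℝ), α0 • u + (m * e u m) • (Complex.I * u) ∈ Prod.fst '' K := by
  have hconv : Convex ℝ (Prod.fst '' K) := b.conv.linear_image (LinearMap.fst ℝ ℂ ℝ)
  have hcomp : IsCompact (Prod.fst '' K) := b.comp.image continuous_fst
  obtain ⟨ρ, hρ, hreg⟩ : ∃ ρ > 0, ∀ y z z', (y, z') ∈ K → dist y (α0 • u) < ρ → |z - h| < ρ →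
      (y, z) ∈ K := by
    have : ∀ᶠ q : ℂ × ℝ in 𝓝 (α0 • u, h), (q.2 - h) ^ 2 < P q.1 := by
      have l : Tendsto (fun q : ℂ × ℝ => P q.1 - (q.2 - h) ^ 2) (𝓝 (α0 • u, h))
          (𝓝 (P (α0 • u) - (h - h) ^ 2)) := Continuous.tendsto (by fun_prop) (α0 • u, h)
      have := l.eventually (lt_mem_nhds (show 0 < P (α0 • u) - (h - h) ^ 2 by simpa using hpos))
      filter_upwards [this] with q hq
      linarith
    obtain ⟨ρ, hρ, hb⟩ := Metric.eventually_nhds_iff.1 this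
    refine ⟨ρ, hρ, fun y z z' hz' h1 h2 => b.mem_of_lt_P hc hP hz' ?_⟩
    exact hb (y := (y, z)) (by rw [Prod.dist_eq]; exact max_lt h1 (by rwa [Real.dist_eq]))
  have hlim0 := b.e_lim hu
  have hs : Tendsto (fun m => m * e u m) (𝓝[≠] 0) (𝓝 0) := by
    have := (tendsto_id (α := ℝ) (x := 𝓝 0)).mul hlim0
    rw [zero_mul] at this
    exact this.mono_left nhdsWithin_le_nhds
  have hpt : ∀ β : ℝ, Tendsto (fun m => β • u + (m * e u m) • (Complex.I * u)) (𝓝[≠] 0)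
      (𝓝 (β • u)) := by
    intro β
    have := (hs.smul_const (Complex.I * u)).const_add (β • u)
    simpa using this
  have hnot : ∀ β : ℝ, α0 < β → β • u ∉ Prod.fst '' K := by
    rintro β hβ ⟨⟨y, z⟩, hq, hqe⟩
    simp only at hqe
    subst hqe
    have hb0 : 0 < β := by linarith
    have := b.smul_mem_UU hq (t := α0 / β) (by positivity) ((div_lt_one hb0).2 hβ)
    rw [smul_smul, div_mul_cancel₀ _ hb0.ne'] at this
    exact hy1 this
  have hin : ∀ β : ℝ, 0 < β → β < α0 → β • u ∈ UU K := by
    intro β h0 h1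
    obtain ⟨⟨y, z⟩, hq, hqe⟩ := hy0
    simp only at hqe
    subst hqe
    have := b.smul_mem_UU hq (t := β / α0) (by positivity) ((div_lt_one hα0).2 h1)
    rwa [smul_smul, div_mul_cancel₀ _ hα0.ne'] at this
  have main : ∀ η : ℝ, 0 < η → η < ρ / 2 → η < α0 → ∀ᶠ m in 𝓝[≠] (0:ℝ), ∃ α, α ≤ α0 + η ∧
      α • u + (m * e u m) • (Complex.I * u) ∈ Prod.fst '' K ∧
      ∀ x ∈ Prod.fst '' K, ((starRingEnd ℂ u) * x).re ≤ α := by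
    intro η hη hηρ hηα
    have e1 : ∀ᶠ m in 𝓝[≠] (0:ℝ), (α0 - η) • u + (m * e u m) • (Complex.I * u) ∈ UU K :=
      (hpt (α0 - η)).eventually ((isOpen_UU K).mem_nhds (hin _ (by linarith) (by linarith)))
    have e2 : ∀ᶠ m in 𝓝[≠] (0:ℝ), (α0 + η) • u + (m * e u m) • (Complex.I * u) ∉ Prod.fst '' K :=
      (hpt (α0 + η)).eventually (hcomp.isClosed.isOpen_compl.mem_nhds (hnot _ (by linarith)))
    have e3 : ∀ᶠ m in 𝓝[≠] (0:ℝ), |e u m - h| < ρ := by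
      have := (hlim0.mono_left (nhdsWithin_le_nhds (s := {0}ᶜ))) (Metric.ball_mem_nhds h hρ)
      filter_upwards [this] with m hm
      rw [← Real.dist_eq]; exact hm
    have e4 : ∀ᶠ m in 𝓝[≠] (0:ℝ), |m * e u m| < ρ / 2 := by
      have := hs (Metric.ball_mem_nhds 0 (half_pos hρ))
      filter_upwards [this] with m hm
      have hm : dist (m * e u m) 0 < ρ / 2 := hm
      rwa [Real.dist_eq, sub_zero] at hm
    filter_upwards [e1, e2, e3, e4, self_mem_nhdsWithin] with m h1 h2 h3 h4 hm0
    have hA : IsCompact {β : ℝ | β • u + (m * e u m) • (Complex.I * u) ∈ Prod.fst '' K} := by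
      rw [Metric.isCompact_iff_isClosed_bounded]
      refine ⟨hcomp.isClosed.preimage (f := fun β : ℝ => β • u + (m * e u m) • (Complex.I * u))
        (by fun_prop), ?_⟩
      obtain ⟨R, hR⟩ := hcomp.isBounded.exists_norm_le
      refine (Metric.isBounded_iff_subset_closedBall 0).2 ⟨R, fun β hβ => ?_⟩
      have h5 := hR _ hβ
      have h6 := Complex.abs_re_le_norm
        ((starRingEnd ℂ u) * (β • u + (m * e u m) • (Complex.I * u)))
      rw [comp_re hu, norm_mul, RCLike.norm_conj, hu, one_mul] at h6
      rw [mem_closedBall, Real.dist_eq, sub_zero]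
      linarith
    obtain ⟨α, hαmem, hαmax⟩ := hA.exists_isGreatest ⟨α0 - η, UU_sub K h1⟩
    have hle : α ≤ α0 + η := by
      by_contra! hlt
      apply h2
      have hd : 0 < α - (α0 - η) := by linarith
      have := hconv (UU_sub K h1) hαmem (a := (α - (α0 + η)) / (α - (α0 - η)))
        (b := 2 * η / (α - (α0 - η))) (div_nonneg (by linarith) hd.le) (by positivity)
        (by field_simp; ring)
      convert this using 1
      have q1 : (α0 + η) = (α - (α0 + η)) / (α - (α0 - η)) * (α0 - η) +
        2 * η / (α - (α0 - η)) * α := by field_simp; ring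
      have q2 : (1:ℝ) = (α - (α0 + η)) / (α - (α0 - η)) + 2 * η / (α - (α0 - η)) := by
        field_simp; ring
      generalize (α - (α0 + η)) / (α - (α0 - η)) = p at q1 q2
      generalize 2 * η / (α - (α0 - η)) = q at q1 q2
      rw [q1]
      have q3 : m * e u m = (p + q) * (m * e u m) := by rw [← q2, one_mul]
      conv_lhs => rw [q3]
      module
    have hge : α0 - η ≤ α := hαmax (UU_sub K h1)
    refine ⟨α, hle, hαmem, fun x hx => b.wall_step hu (y0 := α0 • u) hm0 hreg h3 hαmem
      (fun β hβ => hαmax hβ) ?_ hx⟩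
    rw [dist_eq_norm]
    have : α • u + (m * e u m) • (Complex.I * u) - α0 • u =
      (α - α0) • u + (m * e u m) • (Complex.I * u) := by module
    rw [this]
    refine (norm_add_le _ _).trans_lt ?_
    rw [norm_smul, norm_smul, norm_mul Complex.I u, hu, Complex.norm_I, Real.norm_eq_abs, Real.norm_eq_abs,
      mul_one, mul_one, mul_one]
    have : |α - α0| ≤ η := abs_le.2 ⟨by linarith, by linarith⟩
    linarith
  have hA : ∀ x ∈ Prod.fst '' K, ((starRingEnd ℂ u) * x).re ≤ α0 := by
    intro x hx
    refine le_of_forall_pos_le_add fun η hη => ?_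
    have hmin : 0 < min η (min (ρ / 4) (α0 / 2)) := by positivity
    obtain ⟨m, α, h1, h2, h3⟩ := (main (min η (min (ρ / 4) (α0 / 2))) hmin
      (by have := min_le_right η (min (ρ / 4) (α0 / 2)); have := min_le_left (ρ / 4) (α0 / 2); linarith)
      (by have := min_le_right η (min (ρ / 4) (α0 / 2)); have := min_le_right (ρ / 4) (α0 / 2)
          linarith)).exists
    have := h3 x hx
    have := min_le_left η (min (ρ / 4) (α0 / 2))
    linarith
  refine ⟨hA, ?_⟩
  have hmin : 0 < min (ρ / 4) (α0 / 2) := by positivity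
  filter_upwards [main _ hmin (by have := min_le_left (ρ / 4) (α0 / 2); linarith)
    (by have := min_le_right (ρ / 4) (α0 / 2); linarith)] with m hm
  obtain ⟨α, h1, h2, h3⟩ := hm
  have h4 := hA _ h2
  rw [comp_re hu] at h4
  have h5 := h3 _ hy0
  have h6 := comp_re hu α0 0
  rw [zero_smul, add_zero] at h6
  rw [h6] at h5
  rwa [le_antisymm h4 h5] at h2

lemma no_wall (b : Body K h e) {P : ℂ → ℝ} (hc : Continuous P)
    (hP : ∀ y ∈ UU K, QQ K h y = P y) {y0 : ℂ}
    (hy0 : y0 ∈ Prod.fst '' K) (hy1 : y0 ∉ UU K) : P y0 = 0 := by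
  have hconv : Convex ℝ (Prod.fst '' K) := b.conv.linear_image (LinearMap.fst ℝ ℂ ℝ)
  have hnn : 0 ≤ P y0 := by
    obtain ⟨⟨y, z⟩, hq, rfl⟩ := hy0
    exact (sq_nonneg _).trans (b.le_P hc hP hq)
  by_contra hne
  have hpos : 0 < P y0 := lt_of_le_of_ne hnn (Ne.symm hne)
  have hy00 : y0 ≠ 0 := by rintro rfl; exact hy1 b.zero_mem
  obtain ⟨u, hu, hyu⟩ := exists_unit y0 hy00
  have hα0 : 0 < ‖y0‖ := norm_pos_iff.2 hy00
  set α0 := ‖y0‖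
  rw [hyu] at hy0 hy1 hpos
  obtain ⟨hA, hB⟩ := b.wall hc hP hu hα0 hy0 hy1 hpos
  have hlim0 := b.e_lim hu
  have hs : Tendsto (fun m => m * e u m) (𝓝[≠] 0) (𝓝 0) := by
    have := (tendsto_id (α := ℝ) (x := 𝓝 0)).mul hlim0
    rw [zero_mul] at this
    exact this.mono_left nhdsWithin_le_nhds
  have l1 : Tendsto (fun m => P (α0 • u + ((m * e u m) / 2) • (Complex.I * u))) (𝓝[≠] 0)
      (𝓝 (P (α0 • u + ((0:ℝ) / 2) • (Complex.I * u)))) := by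
    have hcc : Continuous fun s : ℝ => P (α0 • u + (s / 2) • (Complex.I * u)) := by fun_prop
    exact (hcc.tendsto 0).comp hs
  have e1 := l1.eventually (lt_mem_nhds (show 0 < P (α0 • u + ((0:ℝ) / 2) • (Complex.I * u)) by
    simpa using hpos))
  have e2 := (hlim0.mono_left (nhdsWithin_le_nhds (s := {0}ᶜ))).eventually_ne b.hne
  obtain ⟨m, h1, h2, h3, h4⟩ := (hB.and (e1.and (e2.and self_mem_nhdsWithin))).exists
  have hs0 : m * e u m ≠ 0 := mul_ne_zero h4 h3
  set s := m * e u m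
  set y' := α0 • u + (s / 2) • (Complex.I * u) with hy'
  have hy'B : y' ∈ Prod.fst '' K := by
    have := hconv hy0 h1 (a := 1/2) (b := 1/2) (by norm_num) (by norm_num) (by norm_num)
    convert this using 1
    rw [hy']; module
  have hy'U : y' ∉ UU K := by
    intro hU
    have l : Tendsto (fun t : ℝ => (α0 + t) • u + (s / 2) • (Complex.I * u)) (𝓝[>] 0)
      (𝓝 ((α0 + 0) • u + (s / 2) • (Complex.I * u))) :=
      (Continuous.tendsto (by fun_prop) _).mono_left nhdsWithin_le_nhds
    rw [add_zero] at l
    obtain ⟨t, ht, ht0⟩ := ((l.eventually ((isOpen_UU K).mem_nhds hU)).and self_mem_nhdsWithin).exists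
    have := hA _ (UU_sub K ht)
    rw [comp_re hu] at this
    have ht0 : 0 < t := ht0
    linarith
  have hy'0 : y' ≠ 0 := by rintro h0; rw [h0] at hy'U; exact hy'U b.zero_mem
  obtain ⟨u', hu', hyu'⟩ := exists_unit y' hy'0
  have hβ : 0 < ‖y'‖ := norm_pos_iff.2 hy'0
  have h5 := (b.wall hc hP hu' hβ (by rwa [← hyu']) (by rwa [← hyu']) (by rwa [← hyu'])).1 _ h1
  have h6 : ((starRingEnd ℂ y') * (α0 • u + s • (Complex.I * u))).re ≤ ‖y'‖ ^ 2 := by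
    have : starRingEnd ℂ y' = (‖y'‖ : ℂ) * starRingEnd ℂ u' := by
      conv_lhs => rw [hyu']
      rw [Complex.real_smul, map_mul, Complex.conj_ofReal]
    rw [this, mul_assoc, Complex.re_ofReal_mul, sq]
    exact mul_le_mul_of_nonneg_left h5 hβ.le
  have hn : u.re ^ 2 + u.im ^ 2 = 1 := by
    have := Complex.normSq_eq_norm_sq u
    rw [hu, Complex.normSq_apply] at this
    linarith
  rw [← Complex.normSq_eq_norm_sq, Complex.normSq_apply, Complex.mul_re, Complex.conj_re,
    Complex.conj_im, hy'] at h6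
  simp only [Complex.add_re, Complex.add_im, Complex.smul_re, Complex.smul_im, Complex.mul_re,
    Complex.mul_im, Complex.I_re, Complex.I_im, smul_eq_mul] at h6
  have h7 : (α0 ^ 2 + s ^ 2 / 2) * (u.re ^ 2 + u.im ^ 2) ≤
    (α0 ^ 2 + s ^ 2 / 4) * (u.re ^ 2 + u.im ^ 2) := by linarith
  rw [hn] at h7
  have : 0 < s ^ 2 := by positivity
  linarith

lemma exit (b : Body K h e) {y : ℂ} (hy : y ≠ 0) :
    ∃ τ : ℝ, 0 < τ ∧ τ • y ∈ Prod.fst '' K ∧ τ • y ∉ UU K := by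
  have hcomp : IsCompact (Prod.fst '' K) := b.comp.image continuous_fst
  have hn : 0 < ‖y‖ := norm_pos_iff.2 hy
  have hA : IsCompact {τ : ℝ | τ • y ∈ Prod.fst '' K} := by
    rw [Metric.isCompact_iff_isClosed_bounded]
    refine ⟨hcomp.isClosed.preimage (f := fun β : ℝ => β • y) (by fun_prop), ?_⟩
    obtain ⟨R, hR⟩ := hcomp.isBounded.exists_norm_le
    refine (Metric.isBounded_iff_subset_closedBall 0).2 ⟨R / ‖y‖, fun β hβ => ?_⟩
    have h5 := hR _ hβ
    rw [norm_smul] at h5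
    rw [mem_closedBall, dist_zero_right]
    exact (le_div_iff₀ hn).2 h5
  have hopen : ∀ τ : ℝ, τ • y ∈ UU K → ∃ τ', τ < τ' ∧ τ' • y ∈ UU K := by
    intro τ hτ
    have l : Tendsto (fun t : ℝ => t • y) (𝓝[>] τ) (𝓝 (τ • y)) :=
      (Continuous.tendsto (by fun_prop) _).mono_left nhdsWithin_le_nhds
    obtain ⟨t, ht, ht0⟩ := ((l.eventually ((isOpen_UU K).mem_nhds hτ)).and self_mem_nhdsWithin).exists
    exact ⟨t, ht0, ht⟩
  obtain ⟨t0, ht0, ht0U⟩ := hopen 0 (by rw [zero_smul]; exact b.zero_mem)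
  obtain ⟨τ, hτ, hmax⟩ := hA.exists_isGreatest ⟨t0, UU_sub K ht0U⟩
  have := hmax (UU_sub K ht0U)
  refine ⟨τ, by linarith, hτ, fun hU => ?_⟩
  obtain ⟨t, ht, htU⟩ := hopen τ hU
  have := hmax (UU_sub K htU)
  linarith

lemma core (b : Body K h e) : ∃ p q κ c : ℝ, 0 < κ ∧ 0 < c ∧ ∀ y z, (y, z) ∈ K ↔
    κ * ((y.re - p) ^ 2 + (y.im - q) ^ 2) + (z - h) ^ 2 ≤ c := by
  obtain ⟨g, k, hquad⟩ := b.quadratic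
  set c0 := QQ K h 0 with hc0
  have hc0pos : 0 < c0 := by
    have := b.W_pos b.zero_mem
    rw [hc0, QQ]; positivity
  let P : ℂ → ℝ := fun y => c0 + g y + k * ‖y‖ ^ 2
  have hc : Continuous P := by fun_prop
  have hP : ∀ y ∈ UU K, QQ K h y = P y := hquad
  have hk : k < 0 := by
    obtain ⟨a, ha, haB, haU⟩ := b.exit (y := 1) one_ne_zero
    obtain ⟨d, hd, hdB, hdU⟩ := b.exit (y := -1) (neg_ne_zero.2 one_ne_zero)
    have h1 := b.no_wall hc hP haB haU
    have h2 := b.no_wall hc hP hdB hdU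
    simp only [P, map_smul, map_neg, norm_smul, norm_neg, norm_one, Real.norm_eq_abs, mul_one,
      sq_abs, smul_eq_mul] at h1 h2
    have h3 : c0 * (a + d) + k * (a * d * (a + d)) = 0 := by linear_combination d * h1 + a * h2
    by_contra! hk
    have : 0 < c0 * (a + d) := by positivity
    have : 0 ≤ k * (a * d * (a + d)) := by positivity
    linarith
  have hiff : ∀ y z, (y, z) ∈ K ↔ (z - h) ^ 2 ≤ P y := by
    intro y z
    refine ⟨b.le_P hc hP, fun hz => ?_⟩
    by_cases hyB : y ∈ Prod.fst '' K
    · obtain ⟨⟨y, z'⟩, hq, rfl⟩ := hyB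
      exact b.mem_of_le_P hc hP hq hz
    exfalso
    have hy0 : y ≠ 0 := by rintro rfl; exact hyB (UU_sub K b.zero_mem)
    obtain ⟨τ, hτ, hB, hU⟩ := b.exit hy0
    have h1 := b.no_wall hc hP hB hU
    have hτ1 : τ < 1 := by
      by_contra! hge
      apply hyB
      have hconv : Convex ℝ (Prod.fst '' K) := b.conv.linear_image (LinearMap.fst ℝ ℂ ℝ)
      have := hconv.smul_mem_of_zero_mem (UU_sub K b.zero_mem) hB (t := τ⁻¹)
        ⟨by positivity, inv_le_one_of_one_le₀ hge⟩
      rwa [smul_smul, inv_mul_cancel₀ hτ.ne', one_smul] at this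
    have h2 : 0 ≤ P y := (sq_nonneg _).trans hz
    simp only [P, map_smul, norm_smul, Real.norm_eq_abs, mul_pow, sq_abs, smul_eq_mul] at h1 h2
    have h3 : 0 ≤ (-k) * ‖y‖ ^ 2 * (τ * (1 - τ)) := by
      have : 0 < -k := by linarith
      have : 0 < 1 - τ := by linarith
      positivity
    have h4 : 0 < c0 * (1 - τ) := mul_pos hc0pos (by linarith)
    have h5 : 0 ≤ τ * (c0 + g y + k * ‖y‖ ^ 2) := mul_nonneg hτ.le h2
    linarith
  have hg : ∀ y : ℂ, g y = y.re * g 1 + y.im * g Complex.I := by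
    intro y
    have : y = y.re • (1:ℂ) + y.im • Complex.I := by
      simp only [Complex.real_smul, mul_one]; exact (Complex.re_add_im y).symm
    conv_lhs => rw [this]
    simp only [map_add, map_smul, smul_eq_mul]
  set g1 := g 1
  set g2 := g Complex.I
  refine ⟨-g1 / (2 * k), -g2 / (2 * k), -k, c0 + (-k) * ((g1 / (2 * k)) ^ 2 + (g2 / (2 * k)) ^ 2),
    by linarith, ?_, ?_⟩
  · have : 0 < -k := by linarith
    positivity
  intro y z
  rw [hiff]
  have hk0 : k ≠ 0 := hk.ne
  have : P y = c0 + (-k) * ((g1 / (2 * k)) ^ 2 + (g2 / (2 * k)) ^ 2) -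
      (-k) * ((y.re - -g1 / (2 * k)) ^ 2 + (y.im - -g2 / (2 * k)) ^ 2) := by
    simp only [P]
    rw [hg, ← Complex.normSq_eq_norm_sq, Complex.normSq_apply]
    field_simp
    ring
  rw [this]
  constructor <;> intro h1 <;> linarith

end Body

end PartE

section Transfer
open Filter Topology

lemma core_of_refl {K : Set (ℂ × ℝ)} (hcomp : IsCompact K) (hconv : Convex ℝ K)
    (h0 : (0 : ℂ × ℝ) ∈ interior K)
    (hr : ∀ u : ℂ, ‖u‖ = 1 → ∀ m : ℝ, ∃ e : ℝ, ∀ α z : ℝ,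
      (α • u + (m * z) • (Complex.I * u), z) ∈ K →
      (α • u + (m * (2 * e - z)) • (Complex.I * u), 2 * e - z) ∈ K)
    (hns : ¬ ∀ y z, (y, z) ∈ K → (y, -z) ∈ K) :
    ∃ p q h κ c : ℝ, 0 < κ ∧ 0 < c ∧ ∀ y z, (y, z) ∈ K ↔
      κ * ((y.re - p) ^ 2 + (y.im - q) ^ 2) + (z - h) ^ 2 ≤ c := by
  choose! e he using hr
  have hF : IsCompact {z : ℝ | ((0:ℂ), z) ∈ K} := by
    have h1 : IsClosed {z : ℝ | ((0:ℂ), z) ∈ K} := hcomp.isClosed.preimage (by fun_prop)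
    have h2 : IsCompact (Prod.snd '' K) := hcomp.image continuous_snd
    exact h2.of_isClosed_subset h1 (fun z hz => ⟨(0, z), hz, rfl⟩)
  have hne : {z : ℝ | ((0:ℂ), z) ∈ K}.Nonempty := ⟨0, show ((0:ℂ), (0:ℝ)) ∈ K from interior_subset h0⟩
  obtain ⟨M, hM, hMmax⟩ := hF.exists_isGreatest hne
  obtain ⟨N, hN, hNmin⟩ := hF.exists_isLeast hne
  have hsymF : ∀ u : ℂ, ‖u‖ = 1 → ∀ z, ((0:ℂ), z) ∈ K → ((0:ℂ), 2 * e u 0 - z) ∈ K := by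
    intro u hu z hz
    have := he u hu 0 0 z (by simpa using hz)
    simpa using this
  have hee : ∀ u : ℂ, ‖u‖ = 1 → e u 0 = (M + N) / 2 := by
    intro u hu
    have h1 := hMmax (hsymF u hu N hN)
    have h2 := hNmin (hsymF u hu M hM)
    linarith
  have hsym : ∀ y z, (y, z) ∈ K → (y, 2 * ((M + N) / 2) - z) ∈ K := by
    intro y z hz
    by_cases hy : y = 0
    · subst hy
      rw [← hee 1 norm_one]
      exact hsymF 1 norm_one z hz
    have hn : ‖y‖ ≠ 0 := norm_ne_zero_iff.2 hy
    have hu : ‖(‖y‖⁻¹ • y)‖ = 1 := by rw [norm_smul, norm_inv, norm_norm, inv_mul_cancel₀ hn]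
    have hyu : ‖y‖ • (‖y‖⁻¹ • y) = y := by rw [smul_smul, mul_inv_cancel₀ hn, one_smul]
    have := he _ hu 0 ‖y‖ z (by rw [hyu]; simpa using hz)
    rw [hyu, hee _ hu] at this
    simpa using this
  have hh : (M + N) / 2 ≠ 0 := by
    intro h
    apply hns
    intro y z hz
    have := hsym y z hz
    rw [h] at this
    simpa using this
  have b : Body K ((M + N) / 2) e := ⟨hcomp, hconv, h0, fun u hu m α z hz => he u hu m α z hz, hsym, hh⟩
  obtain ⟨p, q, κ, c, h1, h2, h3⟩ := b.core
  exact ⟨p, q, _, κ, c, h1, h2, h3⟩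

/-- Point with given coordinates. -/
def pt (b : OrthonormalBasis (Fin 3) ℝ (Euc 3)) (p : Euc 3) (x y z : ℝ) : Euc 3 :=
  p + (x • b 0 + y • b 1 + z • b 2)

lemma pt_surj (b : OrthonormalBasis (Fin 3) ℝ (Euc 3)) (p x : Euc 3) :
    x = pt b p (inner ℝ (b 0) (x - p)) (inner ℝ (b 1) (x - p)) (inner ℝ (b 2) (x - p)) := by
  have := b.sum_repr' (x - p)
  rw [Fin.sum_univ_three] at this
  rw [pt, this, add_sub_cancel]

lemma norm_comb (b : OrthonormalBasis (Fin 3) ℝ (Euc 3)) (x y z : ℝ) :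
    ‖x • b 0 + y • b 1 + z • b 2‖ ^ 2 = x ^ 2 + y ^ 2 + z ^ 2 := by
  have h : x • b 0 + y • b 1 + z • b 2 = b.repr.symm (!₂[x, y, z]) := by
    rw [← b.sum_repr_symm, Fin.sum_univ_three]; simp
  rw [h, LinearIsometryEquiv.norm_map, EuclideanSpace.norm_sq_eq, Fin.sum_univ_three]
  simp

lemma inner_comb (b : OrthonormalBasis (Fin 3) ℝ (Euc 3)) (x y z : ℝ) :
    inner ℝ (b 0) (x • b 0 + y • b 1 + z • b 2) = x ∧
    inner ℝ (b 1) (x • b 0 + y • b 1 + z • b 2) = y ∧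
    inner ℝ (b 2) (x • b 0 + y • b 1 + z • b 2) = z := by
  have h := orthonormal_iff_ite.1 b.orthonormal
  simp only [inner_add_right, inner_smul_right, h]
  simp

lemma pt_inj (b : OrthonormalBasis (Fin 3) ℝ (Euc 3)) (p : Euc 3) {x y z x' y' z' : ℝ}
    (h : pt b p x y z = pt b p x' y' z') : x = x' ∧ y = y' ∧ z = z' := by
  have h := add_left_cancel h
  obtain ⟨h1, h2, h3⟩ := inner_comb b x y z
  obtain ⟨h1', h2', h3'⟩ := inner_comb b x' y' z'
  rw [h] at h1 h2 h3
  exact ⟨h1.symm.trans h1', h2.symm.trans h2', h3.symm.trans h3'⟩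

lemma pt_dist (b : OrthonormalBasis (Fin 3) ℝ (Euc 3)) (p : Euc 3) (x y z x' y' z' : ℝ) :
    dist (pt b p x y z) (pt b p x' y' z') ^ 2 = (x - x') ^ 2 + (y - y') ^ 2 + (z - z') ^ 2 := by
  rw [dist_eq_norm, ← norm_comb b]
  congr 2
  simp only [pt]; module

lemma exists_basis (H : AffineSubspace ℝ (Euc 3)) (hH : IsHyperplane H) :
    ∃ b : OrthonormalBasis (Fin 3) ℝ (Euc 3), b 2 ∈ H.directionᗮ ∧
      ∀ x, x ∈ H.direction ↔ inner ℝ (b 2) x = 0 := by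
  have h1 := Submodule.finrank_add_finrank_orthogonal H.direction
  rw [hH.2, finrank_euclideanSpace_fin] at h1
  have h2 : Module.finrank ℝ H.directionᗮ = 1 := by omega
  obtain ⟨⟨n0, hn0⟩, hne, hspan⟩ := finrank_eq_one_iff'.1 h2
  have hn00 : n0 ≠ 0 := fun h => hne (by simp [h])
  have hnn : ‖n0‖ ≠ 0 := norm_ne_zero_iff.2 hn00
  let n : Euc 3 := ‖n0‖⁻¹ • n0
  have hn1 : ‖n‖ = 1 := by simp only [n]; rw [norm_smul, norm_inv, norm_norm, inv_mul_cancel₀ hnn]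
  have hor : Orthonormal ℝ (({2} : Set (Fin 3)).domRestrict (fun _ => n)) := by
    refine ⟨fun i => hn1, ?_⟩
    intro i j hij
    exact absurd (Subsingleton.elim i j) hij
  obtain ⟨b, hb⟩ := hor.exists_orthonormalBasis_extension_of_card_eq (by simp)
  have hb2 : b 2 = n := hb 2 rfl
  have hm : b 2 ∈ H.directionᗮ := by rw [hb2]; exact Submodule.smul_mem _ _ hn0
  refine ⟨b, hm, fun x => ⟨fun hx => Submodule.inner_left_of_mem_orthogonal hx hm, fun hx => ?_⟩⟩
  rw [← Submodule.orthogonal_orthogonal H.direction, Submodule.mem_orthogonal]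
  intro v hv
  obtain ⟨c, hc⟩ := hspan ⟨v, hv⟩
  have hc : c • n0 = v := congrArg Subtype.val hc
  rw [hb2] at hx
  simp only [n, inner_smul_left] at hx
  rw [← hc, inner_smul_left]
  have : inner ℝ n0 x = 0 := by
    rcases mul_eq_zero.1 hx with h | h
    · simp at h; exact absurd h hn00
    · exact h
  rw [this, mul_zero]

/-- The reflection property of one section. -/
lemma section_refl {K : Set (Euc 3)} {H : AffineSubspace ℝ (Euc 3)} {p : Euc 3}
    {b : OrthonormalBasis (Fin 3) ℝ (Euc 3)}
    (hb : ∀ x, x ∈ H.direction ↔ inner ℝ (b 2) x = 0)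
    (hsec : ∀ P : AffineSubspace ℝ (Euc 3), IsHyperplane P → p ∈ P →
      ∃ L : AffineSubspace ℝ (Euc 3), Module.finrank ℝ L.direction = 1 ∧
        L.direction ≤ H.direction ∧ IsSectionSymmPlane K P L)
    {r s : ℝ} (hrs : r ^ 2 + s ^ 2 = 1) (m : ℝ) :
    ∃ e : ℝ, ∀ α z : ℝ, pt b p (α * r - m * z * s) (α * s + m * z * r) z ∈ K →
      pt b p (α * r - m * (2 * e - z) * s) (α * s + m * (2 * e - z) * r) (2 * e - z) ∈ K := by
  let g : ℝ → ℝ → Euc 3 := fun α z => pt b p (α * r - m * z * s) (α * s + m * z * r) z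
  let U : Euc 3 := r • b 0 + s • b 1 + (0:ℝ) • b 2
  let w : Euc 3 := (-(m * s)) • b 0 + (m * r) • b 1 + (1:ℝ) • b 2
  have hg : ∀ α z, g α z = p + (α • U + z • w) := by
    intro α z; simp only [g, pt, U, w]; module
  have hU2 : inner ℝ (b 2) U = 0 := (inner_comb b _ _ _).2.2
  have hw2 : inner ℝ (b 2) w = 1 := (inner_comb b _ _ _).2.2
  have hU0 : U ≠ 0 := by
    intro h
    have := norm_comb b r s 0
    rw [show r • b 0 + s • b 1 + (0:ℝ) • b 2 = 0 from h, norm_zero] at this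
    nlinarith
  have hgd : ∀ α z β y, dist (g α z) (g β y) ^ 2 = (α - β) ^ 2 + (z - y) ^ 2 * (m ^ 2 + 1) := by
    intro α z β y
    simp only [g]
    rw [pt_dist]
    linear_combination ((α - β) ^ 2 + m ^ 2 * (z - y) ^ 2) * hrs
  let P : AffineSubspace ℝ (Euc 3) := AffineSubspace.mk' p (Submodule.span ℝ {U, w})
  have hPmem : ∀ x, x ∈ P ↔ ∃ α z, g α z = x := by
    intro x
    simp only [P]
    rw [AffineSubspace.mem_mk', Submodule.mem_span_pair, vsub_eq_sub]
    refine exists_congr fun α => exists_congr fun z => ?_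
    rw [hg]
    constructor
    · intro h; rw [h, add_sub_cancel]
    · intro h; rw [← h, add_sub_cancel_left]
  have hPh : IsHyperplane P := by
    refine ⟨⟨p, AffineSubspace.self_mem_mk' _ _⟩, ?_⟩
    have hPd : P.direction = Submodule.span ℝ {U, w} := AffineSubspace.direction_mk' _ _
    rw [hPd]
    have hli : LinearIndependent ℝ ![U, w] := by
      rw [LinearIndependent.pair_iff]
      intro a c hac
      have h1 : inner ℝ (b 2) (a • U + c • w) = c := by
        rw [inner_add_right, inner_smul_right, inner_smul_right, hU2, hw2]; ring
      rw [hac, inner_zero_right] at h1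
      rw [← h1, zero_smul, add_zero] at hac
      exact ⟨(smul_eq_zero.1 hac).resolve_right hU0, h1.symm⟩
    have h1 := finrank_span_eq_card hli
    have h2 : Set.range ![U, w] = {U, w} := by simp [Matrix.range_cons, Set.pair_comm]
    rw [h2] at h1
    simpa using h1
  obtain ⟨L, hL1, hLH, hLP, f, hfi, -, hfP, hfL, hfK⟩ := hsec P hPh (AffineSubspace.self_mem_mk' _ _)
  have hLdir : ∀ d ∈ L.direction, ∃ a : ℝ, d = a • U := by
    intro d hd
    have h1 : d ∈ P.direction := AffineSubspace.direction_le hLP hd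
    simp only [P, AffineSubspace.direction_mk'] at h1
    obtain ⟨a, c, rfl⟩ := Submodule.mem_span_pair.1 h1
    have h2 := (hb _).1 (hLH hd)
    rw [inner_add_right, inner_smul_right, inner_smul_right, hU2, hw2] at h2
    have : c = 0 := by linarith
    exact ⟨a, by rw [this, zero_smul, add_zero]⟩
  have hUL : U ∈ L.direction := by
    obtain ⟨⟨d, hd⟩, hne, -⟩ := finrank_eq_one_iff'.1 hL1
    obtain ⟨a, ha⟩ := hLdir d hd
    have ha0 : a ≠ 0 := by
      rintro rfl
      apply hne
      simp [ha]
    have : U = a⁻¹ • d := by rw [ha, smul_smul, inv_mul_cancel₀ ha0, one_smul]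
    rw [this]
    exact Submodule.smul_mem _ _ hd
  have hLne : (L : Set (Euc 3)).Nonempty := by
    rw [Set.nonempty_iff_ne_empty]
    intro h
    have h : L = ⊥ := (AffineSubspace.coe_eq_bot_iff L).1 h
    rw [h, AffineSubspace.direction_bot] at hUL
    exact hU0 ((Submodule.mem_bot ℝ).1 hUL)
  obtain ⟨x0, hx0⟩ := hLne
  obtain ⟨a0, e, hx0g⟩ := (hPmem x0).1 (hLP hx0)
  have hgL : ∀ β, g β e ∈ L := by
    intro β
    have h1 := AffineSubspace.vadd_mem_of_mem_direction (Submodule.smul_mem _ (β - a0) hUL) hx0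
    rw [← hx0g, vadd_eq_add, hg] at h1
    rw [hg]
    convert h1 using 1
    module
  have hLg : ∀ α z, g α z ∈ L → z = e := by
    intro α z hz
    have h1 := AffineSubspace.vsub_mem_direction hz hx0
    have h2 := (hb _).1 (hLH h1)
    rw [← hx0g, vsub_eq_sub, hg, hg] at h2
    have h3 : p + (α • U + z • w) - (p + (a0 • U + e • w)) = (α - a0) • U + (z - e) • w := by module
    rw [h3, inner_add_right, inner_smul_right, inner_smul_right, hU2, hw2] at h2
    linarith
  have hfix : ∀ x, x ∈ P → (f x = x ↔ x ∈ L) := by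
    intro x hx
    have : x ∈ {x ∈ (P : Set (Euc 3)) | f x = x} ↔ x ∈ (L : Set (Euc 3)) := by rw [hfL]
    constructor
    · intro h; exact this.1 ⟨hx, h⟩
    · intro h; exact (this.2 h).2
  refine ⟨e, fun α z hz => ?_⟩
  have hx : g α z ∈ P := (hPmem _).2 ⟨_, _, rfl⟩
  have hfx : f (g α z) ∈ (P : Set (Euc 3)) := by rw [← hfP]; exact ⟨_, hx, rfl⟩
  obtain ⟨α', z', hz'⟩ := (hPmem _).1 hfx
  have hdist : ∀ β, (α' - β) ^ 2 + (z' - e) ^ 2 * (m ^ 2 + 1) =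
      (α - β) ^ 2 + (z - e) ^ 2 * (m ^ 2 + 1) := by
    intro β
    rw [← hgd, ← hgd, hz']
    have h1 := (hfix _ (hLP (hgL β))).2 (hgL β)
    conv_lhs => rw [← h1]
    rw [hfi.dist_eq]
  have hα : α' = α := by
    have h0 := hdist 0
    have h1 := hdist 1
    linarith
  have hzz : z' = 2 * e - z := by
    have h0 := hdist 0
    rw [hα] at h0
    have h1 : (z' - e) ^ 2 = (z - e) ^ 2 :=
      mul_right_cancel₀ (show m ^ 2 + 1 ≠ 0 by positivity) (by linarith)
    rcases sq_eq_sq_iff_eq_or_eq_neg.1 h1 with h2 | h2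
    · have h3 : z' = z := by linarith
      rw [hα, h3] at hz'
      have := hLg _ _ ((hfix _ hx).1 hz'.symm)
      linarith
    · linarith
  have hfin : f (g α z) ∈ (P : Set (Euc 3)) ∩ K := by
    rw [← hfK]; exact ⟨_, ⟨hx, hz⟩, rfl⟩
  rw [← hz', hα, hzz] at hfin
  exact hfin.2

lemma not_sym {K : Set (Euc 3)} {H : AffineSubspace ℝ (Euc 3)} {p : Euc 3}
    {b : OrthonormalBasis (Fin 3) ℝ (Euc 3)}
    (hb : ∀ x, x ∈ H.direction ↔ inner ℝ (b 2) x = 0)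
    (hnotsym : ∀ H' : AffineSubspace ℝ (Euc 3), H'.direction = H.direction →
      IsSymmetryPlane K H' → p ∉ H') :
    ¬ ∀ x y z, pt b p x y z ∈ K → pt b p x y (-z) ∈ K := by
  intro hs
  refine hnotsym (AffineSubspace.mk' p H.direction) (AffineSubspace.direction_mk' _ _) ?_
    (AffineSubspace.self_mem_mk' _ _)
  let f : Euc 3 → Euc 3 := fun x =>
    pt b p (inner ℝ (b 0) (x - p)) (inner ℝ (b 1) (x - p)) (-inner ℝ (b 2) (x - p))
  have hf : ∀ x y z, f (pt b p x y z) = pt b p x y (-z) := by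
    intro x y z
    simp only [f]
    have h1 : pt b p x y z - p = x • b 0 + y • b 1 + z • b 2 := by simp only [pt]; module
    obtain ⟨h2, h3, h4⟩ := inner_comb b x y z
    rw [h1, h2, h3, h4]
  have hff : ∀ x, f (f x) = x := by
    intro x
    have h1 : ∀ x y z, f (f (pt b p x y z)) = pt b p x y z := by
      intro x y z
      rw [hf x y z, hf x y (-z), neg_neg]
    have h2 := h1 (inner ℝ (b 0) (x - p)) (inner ℝ (b 1) (x - p)) (inner ℝ (b 2) (x - p))
    rwa [← pt_surj b p x] at h2
  have hfK : ∀ x ∈ K, f x ∈ K := by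
    intro x hx
    rw [pt_surj b p x] at hx ⊢
    rw [hf]
    exact hs _ _ _ hx
  refine ⟨f, ⟨?_, funext hff, ?_⟩, ?_⟩
  · refine Isometry.of_dist_eq fun x y => ?_
    rw [pt_surj b p x, pt_surj b p y, hf, hf]
    rw [← sq_eq_sq₀ dist_nonneg dist_nonneg, pt_dist, pt_dist]
    ring
  · ext x
    rw [mem_ofPred_eq, SetLike.mem_coe, AffineSubspace.mem_mk', hb, vsub_eq_sub]
    constructor
    · intro h
      have h1 := pt_surj b p x
      have h2 := pt_inj b p (h.trans h1)
      linarith [h2.2.2]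
    · intro h
      conv_rhs => rw [pt_surj b p x]
      simp only [f]
      rw [h, neg_zero]
  · ext x
    constructor
    · rintro ⟨y, hy, rfl⟩; exact hfK y hy
    · intro hx; exact ⟨f x, hfK x hx, hff x⟩

lemma coords {K : Set (Euc 3)} (hK : IsConvexBody K)
    {H : AffineSubspace ℝ (Euc 3)} {p : Euc 3} (hp : p ∈ interior K)
    (hnotsym : ∀ H' : AffineSubspace ℝ (Euc 3), H'.direction = H.direction →
      IsSymmetryPlane K H' → p ∉ H')
    (hsec : ∀ P : AffineSubspace ℝ (Euc 3), IsHyperplane P → p ∈ P →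
      ∃ L : AffineSubspace ℝ (Euc 3), Module.finrank ℝ L.direction = 1 ∧
        L.direction ≤ H.direction ∧ IsSectionSymmPlane K P L)
    {b : OrthonormalBasis (Fin 3) ℝ (Euc 3)}
    (hb : ∀ x, x ∈ H.direction ↔ inner ℝ (b 2) x = 0) :
    ∃ x0 y0 z0 κ c : ℝ, 0 < κ ∧ 0 < c ∧ ∀ x y z, pt b p x y z ∈ K ↔
      κ * ((x - x0) ^ 2 + (y - y0) ^ 2) + (z - z0) ^ 2 ≤ c := by
  let Φ : ℂ × ℝ → Euc 3 := fun q => pt b p q.1.re q.1.im q.2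
  let Ψ : Euc 3 → ℂ × ℝ := fun x =>
    (⟨inner ℝ (b 0) (x - p), inner ℝ (b 1) (x - p)⟩, inner ℝ (b 2) (x - p))
  have hΦc : Continuous Φ := by
    simp only [Φ, pt]
    have h1 : Continuous fun q : ℂ × ℝ => q.1.re := Complex.continuous_re.comp continuous_fst
    have h2 : Continuous fun q : ℂ × ℝ => q.1.im := Complex.continuous_im.comp continuous_fst
    fun_prop
  have hΨc : Continuous Ψ := by
    have h1 : Ψ = fun x => (((inner ℝ (b 0) (x - p) : ℝ) : ℂ) +
        ((inner ℝ (b 1) (x - p) : ℝ) : ℂ) * Complex.I, inner ℝ (b 2) (x - p)) := by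
      funext x
      simp only [Ψ]
      rw [← Complex.mk_eq_add_mul_I]
    rw [h1]
    fun_prop
  have hΦΨ : ∀ x, Φ (Ψ x) = x := fun x => (pt_surj b p x).symm
  have hΨΦ : ∀ q, Ψ (Φ q) = q := by
    intro q
    have h1 : Φ q - p = q.1.re • b 0 + q.1.im • b 1 + q.2 • b 2 := by simp only [Φ, pt]; module
    obtain ⟨h2, h3, h4⟩ := inner_comb b q.1.re q.1.im q.2
    simp only [Ψ]
    rw [h1, h2, h3, h4]
  have himg : Φ ⁻¹' K = Ψ '' K := by
    ext q
    constructor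
    · intro hq; exact ⟨Φ q, hq, hΨΦ q⟩
    · rintro ⟨x, hx, rfl⟩
      rw [mem_preimage, hΦΨ]; exact hx
  have hΦ0 : Φ 0 = p := by simp [Φ, pt]
  obtain ⟨x0, y0, z0, κ, c, h1, h2, h3⟩ := core_of_refl (K := Φ ⁻¹' K)
    (by rw [himg]; exact hK.1.image hΨc)
    (by
      intro q hq q' hq' s t hs ht hst
      have := hK.2.1 hq hq' hs ht hst
      rw [mem_preimage]
      convert this using 1
      simp only [Φ, pt, Prod.fst_add, Prod.snd_add, Prod.smul_fst, Prod.smul_snd, Complex.add_re,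
        Complex.add_im, Complex.smul_re, Complex.smul_im, smul_eq_mul]
      have hp' : p = (s + t) • p := by rw [hst, one_smul]
      conv_lhs => rw [hp']
      module)
    (preimage_interior_subset_interior_preimage hΦc (by rw [mem_preimage, hΦ0]; exact hp))
    (by
      intro u hu m
      have hn : u.re ^ 2 + u.im ^ 2 = 1 := by
        have := Complex.normSq_eq_norm_sq u
        rw [hu, Complex.normSq_apply] at this
        linarith
      obtain ⟨e, he⟩ := section_refl hb hsec hn m
      refine ⟨e, fun α z hz => ?_⟩
      have hform : ∀ z : ℝ, Φ (α • u + (m * z) • (Complex.I * u), z) =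
          pt b p (α * u.re - m * z * u.im) (α * u.im + m * z * u.re) z := by
        intro z
        simp only [Φ, Complex.add_re, Complex.add_im, Complex.smul_re, Complex.smul_im,
          Complex.mul_re, Complex.mul_im, Complex.I_re, Complex.I_im, smul_eq_mul]
        congr 1 <;> ring
      rw [mem_preimage, hform] at hz ⊢
      exact he α z hz)
    (by
      intro hs
      exact not_sym hb hnotsym fun x y z hxyz => hs ⟨x, y⟩ z hxyz)
  exact ⟨x0, y0, z0, κ, c, h1, h2, fun x y z => h3 ⟨x, y⟩ z⟩

end Transfer

/-- Main theorem in dimension 3: a Larman point `p` that is not a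
revolution point, not on a plane of symmetry of `K` parallel to `H`, with all plane
sections through `p` having a line of symmetry parallel to `H`, forces `K` to be an
ellipsoid of revolution with axis perpendicular to `H`. -/
theorem stmt15 (K : Set (Euc 3)) (hK : IsConvexBody K)
    (H : AffineSubspace ℝ (Euc 3)) (hH : IsHyperplane H)
    (p : Euc 3) (hp : p ∈ interior K)
    (hLarman : IsLarmanPoint K p) (hnotrev : ¬ IsRevolutionPoint K p)
    (hnotsym : ∀ H' : AffineSubspace ℝ (Euc 3), H'.direction = H.direction →
      IsSymmetryPlane K H' → p ∉ H')
    (hsec : ∀ P : AffineSubspace ℝ (Euc 3), IsHyperplane P → p ∈ P →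
      ∃ L : AffineSubspace ℝ (Euc 3), Module.finrank ℝ L.direction = 1 ∧
        L.direction ≤ H.direction ∧ IsSectionSymmPlane K P L) :
    ∃ L : AffineSubspace ℝ (Euc 3), (L : Set (Euc 3)).Nonempty ∧
      L.direction = H.directionᗮ ∧ IsEllipsoidOfDim 3 K ∧
      ∀ f : Euc 3 ≃ᵃⁱ[ℝ] Euc 3, IsRotationAbout f L → f '' K = K := by
  obtain ⟨b, hb2, hb⟩ := exists_basis H hH
  obtain ⟨x0, y0, z0, κ, c, hκ, hc, hmem⟩ := coords hK hp hnotsym hsec hb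
  refine ⟨AffineSubspace.mk' (pt b p x0 y0 z0) H.directionᗮ, ⟨_, AffineSubspace.self_mem_mk' _ _⟩,
    AffineSubspace.direction_mk' _ _, ?_, ?_⟩
  · let sc : Fin 3 → ℝ := ![√(c / κ), √(c / κ), √c]
    have hs0 : √(c / κ) ≠ 0 := by positivity
    have hs2 : √c ≠ 0 := by positivity
    have hsc : ∀ i, sc i ≠ 0 := by
      intro i; fin_cases i
      · exact hs0
      · exact hs0
      · exact hs2
    let B := b.toBasis.unitsSMul (fun i => Units.mk0 (sc i) (hsc i))
    let T0 : Euc 3 ≃ₗ[ℝ] Euc 3 := (WithLp.linearEquiv 2 ℝ (Fin 3 → ℝ)).trans B.equivFun.symm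
    let T : Euc 3 ≃ᵃ[ℝ] Euc 3 :=
      T0.toAffineEquiv.trans (AffineEquiv.constVAdd ℝ (Euc 3) (pt b p x0 y0 z0))
    have hT : ∀ x : Euc 3, T x = pt b p (x0 + √(c / κ) * x 0) (y0 + √(c / κ) * x 1) (z0 + √c * x 2) := by
      intro x
      have h1 : T x = pt b p x0 y0 z0 + ∑ i, x i • B i := by
        simp [T, T0, Module.Basis.equivFun_symm_apply]
      rw [h1, Fin.sum_univ_three]
      simp only [B, Module.Basis.unitsSMul_apply, OrthonormalBasis.coe_toBasis, Units.smul_def,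
        Units.val_mk0, sc, pt, Matrix.cons_val]
      module
    have hball : ∀ x : Euc 3, T x ∈ K ↔ x ∈ closedBall (0 : Euc 3) 1 := by
      intro x
      rw [hT, hmem, mem_closedBall, dist_zero_right, ← sq_le_one_iff₀ (norm_nonneg x),
        EuclideanSpace.norm_sq_eq, Fin.sum_univ_three]
      simp only [Real.norm_eq_abs, sq_abs, add_sub_cancel_left, mul_pow]
      rw [Real.sq_sqrt (by positivity), Real.sq_sqrt hc.le]
      have : κ * (c / κ * x 0 ^ 2 + c / κ * x 1 ^ 2) + c * x 2 ^ 2 =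
        c * (x 0 ^ 2 + x 1 ^ 2 + x 2 ^ 2) := by field_simp
      rw [this]
      constructor
      · intro h; by_contra! h2; nlinarith
      · intro h; nlinarith
    refine ⟨T, ⊤, by simp, ?_⟩
    ext y
    rw [Submodule.top_coe, inter_univ]
    constructor
    · intro hy
      refine ⟨T.symm y, ?_, T.apply_symm_apply y⟩
      rw [← hball, T.apply_symm_apply]; exact hy
    · rintro ⟨x, hx, rfl⟩
      exact (hball x).2 hx
  · intro f hf
    have hf1 : f (pt b p x0 y0 z0) = pt b p x0 y0 z0 := hf.1 _ (AffineSubspace.self_mem_mk' _ _)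
    have hf2 : f (pt b p x0 y0 (z0 + 1)) = pt b p x0 y0 (z0 + 1) := by
      apply hf.1
      rw [AffineSubspace.mem_mk']
      convert hb2 using 1
      rw [vsub_eq_sub]; simp only [pt]; module
    have hiff : ∀ x, f x ∈ K ↔ x ∈ K := by
      intro x
      have h1 := f.dist_map x (pt b p x0 y0 z0)
      have h2 := f.dist_map x (pt b p x0 y0 (z0 + 1))
      rw [hf1] at h1
      rw [hf2] at h2
      have hx := pt_surj b p x
      have hy := pt_surj b p (f x)
      generalize inner ℝ (b 0) (x - p) = a1 at hx
      generalize inner ℝ (b 1) (x - p) = a2 at hx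
      generalize inner ℝ (b 2) (x - p) = a3 at hx
      generalize inner ℝ (b 0) (f x - p) = c1 at hy
      generalize inner ℝ (b 1) (f x - p) = c2 at hy
      generalize inner ℝ (b 2) (f x - p) = c3 at hy
      rw [hy] at h1 h2 ⊢
      rw [hx] at h1 h2 ⊢
      have h1 := congrArg (· ^ 2) h1
      have h2 := congrArg (· ^ 2) h2
      simp only [pt_dist] at h1 h2
      have h3 : c3 = a3 := by linarith
      subst h3
      have h4 : (c1 - x0) ^ 2 + (c2 - y0) ^ 2 = (a1 - x0) ^ 2 + (a2 - y0) ^ 2 := by linarith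
      rw [hmem, hmem, h4]
    ext y
    constructor
    · rintro ⟨x, hx, rfl⟩; exact (hiff x).2 hx
    · intro hy
      refine ⟨f.symm y, ?_, f.apply_symm_apply y⟩
      rw [← hiff, f.apply_symm_apply]; exact hy
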